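/- arXiv:1211.3766 — 2 statements merged into one kernel-verified Lean document; each statement's English description precedes it below -/
import Mathlib

section
/- Let n ≥ 2. Suppose S ⊆ ℂ^n is an irreducible Zariski closed subset defined over ℚ̄ of dimension n−1, and T ⊆ (ℂ^*)^n is an irreducible Zariski closed subset defined over ℚ̄ of dimension n−1 such that exp(S) ⊆ T. Then S is a translate of a linear subspace defined over ℚ (i.e., S is the zero locus of a polynomial of total degree one with rational coefficients), and T is a torsion translate of a subtorus of (ℂ^*)^n. -/
open MvPolynomial

noncomputable section

/-- The coordinatewise exponential map `ℂ^n → (ℂ^*)^n`,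
`z ↦ (e^{2π√-1 z_λ})_λ`. -/
def expMap (n : ℕ) (z : Fin n → ℂ) : Fin n → ℂ :=
  fun i => Complex.exp (2 * (Real.pi : ℂ) * Complex.I * z i)

/-- A subset of `ℂ^n` is Zariski closed if it is the common zero locus of a family
of polynomials with complex coefficients. -/
def ZClosed (n : ℕ) (S : Set (Fin n → ℂ)) : Prop :=
  ∃ P : Set (MvPolynomial (Fin n) ℂ), S = {z | ∀ p ∈ P, eval z p = 0}

/-- Zariski closed and defined over `ℚ̄`: the common zero locus of a family of
polynomials whose coefficients are algebraic over `ℚ`. -/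
def ZClosedQbar (n : ℕ) (S : Set (Fin n → ℂ)) : Prop :=
  ∃ P : Set (MvPolynomial (Fin n) ℂ),
    (∀ p ∈ P, ∀ m, IsAlgebraic ℚ (coeff m p)) ∧
    S = {z | ∀ p ∈ P, eval z p = 0}

/-- A subset of `(ℂ^*)^n` (viewed as the set of points of `ℂ^n` with all coordinates
nonzero) is Zariski closed if it is the common zero locus in `(ℂ^*)^n` of a family of
polynomials. -/
def ZClosedTorus (n : ℕ) (T : Set (Fin n → ℂ)) : Prop :=
  ∃ P : Set (MvPolynomial (Fin n) ℂ),
    T = {z | (∀ i, z i ≠ 0) ∧ ∀ p ∈ P, eval z p = 0}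

/-- Zariski closed in `(ℂ^*)^n` and defined over `ℚ̄`. -/
def ZClosedTorusQbar (n : ℕ) (T : Set (Fin n → ℂ)) : Prop :=
  ∃ P : Set (MvPolynomial (Fin n) ℂ),
    (∀ p ∈ P, ∀ m, IsAlgebraic ℚ (coeff m p)) ∧
    T = {z | (∀ i, z i ≠ 0) ∧ ∀ p ∈ P, eval z p = 0}

/-- A set is irreducible (with respect to a given notion of closed set) if it is
nonempty and not the union of two proper closed subsets of it. -/
def IsIrrOf {α : Type*} (Closed : Set α → Prop) (S : Set α) : Prop :=
  S.Nonempty ∧ ∀ F G : Set α, Closed F → Closed G → S ⊆ F ∪ G → S ⊆ F ∨ S ⊆ G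

/-- The dimension (with respect to a given notion of closed set) of a set `S`:
the supremum of lengths `d` of chains `Z_0 ⊊ Z_1 ⊊ ⋯ ⊊ Z_d` of nonempty
irreducible closed subsets contained in `S`. -/
def dimOf {α : Type*} (Closed : Set α → Prop) (S : Set α) : ℕ∞ :=
  sSup {e : ℕ∞ | ∃ d : ℕ, e = (d : ℕ∞) ∧
    ∃ Z : Fin (d + 1) → Set α,
      (∀ i, Closed (Z i) ∧ IsIrrOf Closed (Z i) ∧ Z i ⊆ S) ∧
      ∀ i j : Fin (d + 1), i < j → Z i ⊂ Z j}

/-- A subtorus of `(ℂ^*)^n`: the image of a homomorphism `(ℂ^*)^m → (ℂ^*)^n`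
given by an integer matrix, `x ↦ (∏_j x_j ^ a_{λ j})_λ`. -/
def IsSubtorus (n : ℕ) (T₀ : Set (Fin n → ℂ)) : Prop :=
  ∃ (m : ℕ) (a : Fin n → Fin m → ℤ),
    T₀ = {z | ∃ x : Fin m → ℂ, (∀ j, x j ≠ 0) ∧ ∀ l, z l = ∏ j, x j ^ a l j}

/-- A torsion point of `(ℂ^*)^n`: every coordinate is a root of unity. -/
def IsTorsionPoint (n : ℕ) (τ : Fin n → ℂ) : Prop :=
  ∀ i, ∃ k : ℕ, 0 < k ∧ τ i ^ k = 1

/-- A torsion translate of a subtorus: a coset `τ · T₀` with `τ` a torsion point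
and `T₀` a subtorus. -/
def IsTorsionTranslateOfSubtorus (n : ℕ) (T : Set (Fin n → ℂ)) : Prop :=
  ∃ (τ : Fin n → ℂ) (T₀ : Set (Fin n → ℂ)),
    IsTorsionPoint n τ ∧ IsSubtorus n T₀ ∧
    T = (fun z => fun i => τ i * z i) '' T₀

section
open Complex

theorem gs_factor (s : Finset ℂ) : ∀ (F : ℂ → ℂ), Differentiable ℂ F → (∀ z ∈ s, F z = 0) →
    ∃ H : ℂ → ℂ, Differentiable ℂ H ∧ ∀ z, F z = (∏ a ∈ s, (z - a)) * H z := by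
  induction s using Finset.induction_on with
  | empty => intro F hF _; exact ⟨F, hF, by simp⟩
  | insert a s ha ih =>
    intro F hF h0
    have hd : Differentiable ℂ (dslope F a) := by
      rw [← differentiableOn_univ] at hF ⊢
      exact (Complex.differentiableOn_dslope Filter.univ_mem).2 hF
    have hz : ∀ z, F z = (z - a) * dslope F a z := by
      intro z
      have := sub_smul_dslope F a z
      rw [h0 a (Finset.mem_insert_self _ _), sub_zero] at this
      rw [← this, smul_eq_mul]
    obtain ⟨H, hH, h⟩ := ih (dslope F a) hd (by
      intro z hzs
      have h1 := hz z
      rw [h0 z (Finset.mem_insert_of_mem hzs)] at h1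
      have : z - a ≠ 0 := sub_ne_zero.2 (by rintro rfl; exact ha hzs)
      exact (mul_eq_zero.1 h1.symm).resolve_left this)
    refine ⟨H, hH, fun z => ?_⟩
    rw [Finset.prod_insert ha, hz, h, mul_assoc]

theorem gs_schwarz (s : Finset ℂ) (F : ℂ → ℂ) (hF : Differentiable ℂ F) (h0 : ∀ z ∈ s, F z = 0)
    (r B : ℝ) (hr : 0 < r) (hs : ∀ z ∈ s, ‖z‖ ≤ r) (hB : ∀ z : ℂ, ‖z‖ = 5 * r → ‖F z‖ ≤ B)
    (w : ℂ) (hw : ‖w‖ ≤ r) : ‖F w‖ ≤ B * (1 / 2) ^ s.card := by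
  obtain ⟨H, hH, h⟩ := gs_factor s F hF h0
  have key : ‖H w‖ ≤ B / (4 * r) ^ s.card := by
    refine Complex.norm_le_of_forall_mem_frontier_norm_le (U := Metric.ball 0 (5 * r))
      Metric.isBounded_ball hH.diffContOnCl ?_ ?_
    · intro z hz
      rw [frontier_ball _ (by positivity)] at hz
      have hz' : ‖z‖ = 5 * r := by simpa using hz
      have h1 := hB z hz'
      rw [h z, norm_mul, norm_prod] at h1
      have h2 : (4 * r) ^ s.card ≤ ∏ a ∈ s, ‖z - a‖ := by
        rw [← Finset.prod_const]
        refine Finset.prod_le_prod (fun _ _ => by positivity) fun a ha => ?_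
        have := norm_sub_norm_le z a
        have := hs a ha
        linarith
      rw [le_div_iff₀ (by positivity)]
      calc ‖H z‖ * (4 * r) ^ s.card ≤ ‖H z‖ * ∏ a ∈ s, ‖z - a‖ := by gcongr
        _ ≤ B := by rw [mul_comm]; exact h1
    · apply subset_closure
      simp
      linarith
  rw [h w, norm_mul, norm_prod]
  have h2 : ∏ a ∈ s, ‖w - a‖ ≤ (2 * r) ^ s.card := by
    rw [← Finset.prod_const]
    refine Finset.prod_le_prod (fun _ _ => by positivity) fun a ha => ?_
    have := norm_sub_le w a
    have := hs a ha
    linarith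
  calc (∏ a ∈ s, ‖w - a‖) * ‖H w‖ ≤ (2 * r) ^ s.card * (B / (4 * r) ^ s.card) := by gcongr
    _ = B * (1 / 2) ^ s.card := by
      have : (4 * r) ^ s.card = (2 * r) ^ s.card * 2 ^ s.card := by rw [← mul_pow]; ring
      rw [this]
      have : (2 * r) ^ s.card ≠ 0 := by positivity
      field_simp
      rw [mul_assoc, ← mul_pow]; norm_num

theorem gs_asymp (Θ : ℝ) (hΘ : 1 ≤ Θ) (κ : ℕ) : ∃ n0 : ℕ, 1 ≤ n0 ∧ ∀ n : ℕ, n0 ≤ n → ∀ M : ℕ, M ^ 2 ≤ n →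
    (Θ * n) ^ (κ * (M * n)) < 2 ^ (n * n) := by
  have h1 : (fun x : ℝ => Real.log x) =o[Filter.atTop] fun x : ℝ => x ^ (1/2 : ℝ) :=
    isLittleO_log_rpow_atTop (by norm_num)
  have hε : 0 < Real.log 2 / (2 * (κ + 1) * √Θ) := by
    have := Real.log_pos (one_lt_two)
    positivity
  have h2 := h1.bound hε
  obtain ⟨x0, hx0⟩ := Filter.eventually_atTop.1 h2
  refine ⟨⌈x0⌉₊ + 1, by omega, fun n hn M hM => ?_⟩
  have hn1 : 1 ≤ n := by omega
  have hnr : (1:ℝ) ≤ n := by exact_mod_cast hn1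
  have hx : x0 ≤ Θ * n := by
    have : x0 ≤ n := (Nat.le_ceil x0).trans (by exact_mod_cast (by omega : ⌈x0⌉₊ ≤ n))
    nlinarith
  have h3 := hx0 _ hx
  have hX1 : 1 ≤ Θ * n := by nlinarith
  rw [Real.norm_of_nonneg (Real.log_nonneg hX1), Real.norm_of_nonneg (by positivity), ← Real.sqrt_eq_rpow,
    Real.sqrt_mul (by linarith)] at h3
  have hsΘ : 0 < √Θ := Real.sqrt_pos.2 (by linarith)
  have h4 : Real.log (Θ * n) ≤ Real.log 2 / (2 * (κ + 1)) * √n := by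
    refine h3.trans (le_of_eq ?_)
    field_simp
  have hMs : (M:ℝ) ≤ √n := Real.le_sqrt_of_sq_le (by exact_mod_cast hM)
  have hs : √(n:ℝ) * √n = n := Real.mul_self_sqrt (by positivity)
  have hl2 := Real.log_pos (one_lt_two)
  rw [← Real.log_lt_log_iff (by positivity) (by positivity), Real.log_pow, Real.log_pow]
  push_cast
  have h5 : (κ:ℝ) * (M * n) * Real.log (Θ * n) ≤ κ * (√n * n) * (Real.log 2 / (2 * (κ + 1)) * √n) := by
    gcongr
    exact Real.log_nonneg hX1
  have h6 : κ * (√n * n) * (Real.log 2 / (2 * (κ + 1)) * √n) = (κ / (2 * (κ + 1))) * (n * n * Real.log 2) := by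
    rw [show κ * (√n * n) * (Real.log 2 / (2 * (κ + 1)) * √n) = κ * (√n * √n * n) * (Real.log 2 / (2 * (κ + 1))) by ring, hs]
    field_simp
  rw [h6] at h5
  have h7 : (κ:ℝ) / (2 * (κ + 1)) < 1 := by
    rw [div_lt_one (by positivity)]
    have : (0:ℝ) ≤ κ := by positivity
    linarith
  refine h5.trans_lt ?_
  have : 0 < (n:ℝ) * n * Real.log 2 := by positivity
  nlinarith

/-- `z^j e^{2πi k z}` are linearly independent. -/
theorem gs_indep (L0 L1 : ℕ) (p : Fin L0 → Fin L1 → ℂ)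
    (h : ∀ z : ℂ, ∑ j, ∑ k, p j k * z ^ (j : ℕ) * exp (2 * Real.pi * I * z) ^ (k : ℕ) = 0) :
    ∀ j k, p j k = 0 := by
  have h1 : ∀ z : ℂ, ∀ j, ∑ k, p j k * exp (2 * Real.pi * I * z) ^ (k : ℕ) = 0 := by
    intro z
    let c : Fin L0 → ℂ := fun j => ∑ k, p j k * exp (2 * Real.pi * I * z) ^ (k : ℕ)
    let P : Polynomial ℂ := ∑ j, Polynomial.C (c j) * Polynomial.X ^ (j : ℕ)
    have hP : P = 0 := by
      refine Polynomial.eq_zero_of_infinite_isRoot P (Set.Infinite.mono (s := Set.range fun m : ℕ => z + m) ?_ ?_)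
      · rintro _ ⟨m, rfl⟩
        have := h (z + m)
        have he : exp (2 * Real.pi * I * (z + m)) = exp (2 * Real.pi * I * z) := by
          rw [Complex.exp_eq_exp_iff_exists_int]
          exact ⟨m, by push_cast; ring⟩
        rw [he] at this
        simp only [Set.mem_ofPred_eq, Polynomial.IsRoot, P, Polynomial.eval_finsetSum, Polynomial.eval_mul,
          Polynomial.eval_C, Polynomial.eval_pow, Polynomial.eval_X]
        rw [← this]
        refine Finset.sum_congr rfl fun j _ => ?_
        simp only [c, Finset.sum_mul]
        refine Finset.sum_congr rfl fun k _ => ?_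
        ring
      · refine Set.infinite_range_of_injective fun a b hab => ?_
        simpa using hab
    intro j
    have h2 := congrArg (fun Q => Polynomial.coeff Q j) hP
    simp only [P, Polynomial.finsetSum_coeff, Polynomial.coeff_C_mul, Polynomial.coeff_X_pow, Polynomial.coeff_zero] at h2
    rw [Finset.sum_eq_single j] at h2
    · simpa [c] using h2
    · intro b _ hb
      rw [if_neg]; · simp
      intro h; exact hb (Fin.ext h.symm)
    · simp
  intro j k
  let P : Polynomial ℂ := ∑ k, Polynomial.C (p j k) * Polynomial.X ^ (k : ℕ)
  have hP : P = 0 := by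
    refine Polynomial.eq_zero_of_infinite_isRoot P (Set.Infinite.mono (s := ({0}ᶜ : Set ℂ)) ?_ ?_)
    · intro x hx
      have hx0 : x ≠ 0 := hx
      have := h1 (Complex.log x / (2 * Real.pi * I)) j
      rw [mul_div_cancel₀ _ Complex.two_pi_I_ne_zero, Complex.exp_log hx0] at this
      simpa [P, Polynomial.eval_finsetSum] using this
    · exact (Set.finite_singleton 0).infinite_compl
  have h2 := congrArg (fun Q => Polynomial.coeff Q k) hP
  simp only [P, Polynomial.finsetSum_coeff, Polynomial.coeff_C_mul, Polynomial.coeff_X_pow, Polynomial.coeff_zero] at h2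
  rw [Finset.sum_eq_single k] at h2
  · simpa using h2
  · intro b _ hb
    rw [if_neg]; · simp
    intro h; exact hb (Fin.ext h.symm)
  · simp

end

section
open Complex NumberField

theorem gs_siegel (K : Type*) [Field K] [NumberField K] : ∃ C : ℝ, 0 ≤ C ∧
    ∀ (α β : Type) [Fintype α] [Fintype β] (p : ℕ) (a : Matrix α β (𝓞 K)) (A : ℝ),
      0 < p → Fintype.card α = p → Fintype.card β = 2 * p → a ≠ 0 → 0 ≤ A →
      (∀ k l, house ((a k l : 𝓞 K) : K) ≤ A) →
      ∃ ξ : β → 𝓞 K, ξ ≠ 0 ∧ (∀ k, ∑ l, a k l * ξ l = 0) ∧ ∀ l, house ((ξ l : 𝓞 K) : K) ≤ C * (2 * p) * A := by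
  classical
  have key : ∃ c : ℝ, ∀ (α β : Type) [Fintype α] [Fintype β] (p : ℕ) (a : Matrix α β (𝓞 K)) (A : ℝ),
      0 < p → Fintype.card α = p → Fintype.card β = 2 * p → a ≠ 0 → 
      (∀ k l, house ((a k l : 𝓞 K) : K) ≤ A) →
      ∃ ξ : β → 𝓞 K, ξ ≠ 0 ∧ a.mulVec ξ = 0 ∧
        ∀ l, house ((ξ l : 𝓞 K) : K) ≤ c * ((c * (2 * p : ℕ) * A) ^ ((p : ℝ) / ((2 * p : ℕ) - p))) := by
    refine ⟨?_, fun α β _ _ p a A hp hα hβ ha hb => ?_⟩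
    rotate_left
    · exact NumberField.house.exists_ne_zero_int_vec_house_le K a ha hp
        (by omega : p < 2 * p) hβ hb hα
  obtain ⟨c, hc⟩ := key
  refine ⟨c * c, mul_self_nonneg _, ?_⟩
  intro α β _ _ p a A hp hα hβ ha hA hb
  obtain ⟨ξ, h1, h2, h3⟩ := hc α β p a A hp hα hβ ha hb
  refine ⟨ξ, h1, fun k => congrFun h2 k, fun l => (h3 l).trans (le_of_eq ?_)⟩
  have : (p : ℝ) / ((2 * p : ℕ) - p) = 1 := by
    have : (p:ℝ) ≠ 0 := by positivity
    push_cast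
    rw [show (2 * (p:ℝ) - p) = p by ring]
    exact div_self this
  rw [this, Real.rpow_one]
  push_cast
  ring

section
variable {K : Type*} [Field K] [NumberField K]

theorem gs_house_one : house (1 : K) = 1 := by
  have := house_intCast (K := K) 1
  simpa using this

theorem gs_house_nat (n : ℕ) : house (n : K) = n := by
  have := house_intCast (K := K) n
  simpa using this

theorem gs_entry (b g : 𝓞 K) (D M : ℕ) (H : ℝ)
    (hH : H = 1 + house (b : K) + house (g : K) + D) (n x y j k J : ℕ) (hx : x ≤ n) (hy : y ≤ n)
    (hn : 1 ≤ n) (hj : j ≤ J) (hk : k ≤ M) :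
    house ((((x + y * b) ^ j * (g ^ k * (D : 𝓞 K) ^ (M - k)) ^ y : 𝓞 K)) : K) ≤
      (H * n) ^ J * H ^ (M * n) := by
  have hb0 := house_nonneg (b : K)
  have hg0 := house_nonneg (g : K)
  have hD0 : (0:ℝ) ≤ D := by positivity
  have hH1 : 1 ≤ H := by linarith
  have hn' : (1:ℝ) ≤ n := by exact_mod_cast hn
  push_cast
  refine (house_mul_le _ _).trans ?_
  have h1 : house (((x:K) + y * b) ^ j) ≤ (H * n) ^ J := by
    refine (house_pow_le _ _).trans ?_
    have h2 : house ((x:K) + y * b) ≤ H * n := by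
      refine (house_add_le _ _).trans ?_
      rw [gs_house_nat, house_nat_mul]
      have : (x:ℝ) ≤ n := by exact_mod_cast hx
      have : (y:ℝ) * house (b:K) ≤ n * house (b : K) := by gcongr
      rw [hH]
      nlinarith
    calc house ((x:K) + y * b) ^ j ≤ (H * n) ^ j := by
          gcongr; exact house_nonneg _
      _ ≤ (H * n) ^ J := pow_le_pow_right₀ (by nlinarith) hj
  have h2 : house (((g:K) ^ k * (D : K) ^ (M - k)) ^ y) ≤ H ^ (M * n) := by
    refine (house_pow_le _ _).trans ?_
    have h3 : house ((g:K) ^ k * (D : K) ^ (M - k)) ≤ H ^ M := by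
      refine (house_mul_le _ _).trans ?_
      calc house ((g:K) ^ k) * house ((D : K) ^ (M - k)) ≤ house (g:K) ^ k * house (D : K) ^ (M - k) := by
            gcongr
            · exact house_nonneg _
            · exact house_pow_le _ _
            · exact house_pow_le _ _
        _ ≤ H ^ k * H ^ (M - k) := by
            rw [gs_house_nat]
            gcongr
            · linarith
            · linarith
        _ = H ^ M := by rw [← pow_add]; congr 1; omega
    calc house ((g:K) ^ k * (D : K) ^ (M - k)) ^ y ≤ (H ^ M) ^ y := by
          gcongr; exact house_nonneg _
      _ = H ^ (M * y) := by rw [pow_mul]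
      _ ≤ H ^ (M * n) := pow_le_pow_right₀ hH1 (by gcongr)
  have : 0 ≤ house (((g:K) ^ k * (D : K) ^ (M - k)) ^ y) := house_nonneg _
  gcongr

/-- the auxiliary function -/
noncomputable def gsF (σ : K →+* ℂ) (M : ℕ) (p : Fin (2 * M ^ 3) × Fin M → 𝓞 K) (z : ℂ) : ℂ :=
  ∑ l, σ (p l) * z ^ (l.1 : ℕ) * exp (2 * Real.pi * I * z) ^ (l.2 : ℕ)

theorem gsF_diff (σ : K →+* ℂ) (M : ℕ) (p : Fin (2 * M ^ 3) × Fin M → 𝓞 K) :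
    Differentiable ℂ (gsF σ M p) := by
  unfold gsF
  fun_prop

theorem gsF_value (σ : K →+* ℂ) (M : ℕ) (p : Fin (2 * M ^ 3) × Fin M → 𝓞 K)
    (b g : 𝓞 K) (D : ℕ) (hg : σ g = D * exp (2 * Real.pi * I * σ b)) (x y : ℕ) :
    σ ((∑ l, ((x + y * b) ^ (l.1 : ℕ) * (g ^ (l.2:ℕ) * (D : 𝓞 K) ^ (M - (l.2:ℕ))) ^ y) * p l : 𝓞 K) : K) =
      (D : ℂ) ^ (M * y) * gsF σ M p (x + y * σ b) := by
  unfold gsF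
  have he : exp (2 * Real.pi * I * (x + y * σ b)) = exp (2 * Real.pi * I * σ b) ^ y := by
    rw [← Complex.exp_nat_mul, Complex.exp_eq_exp_iff_exists_int]
    exact ⟨x, by push_cast; ring⟩
  rw [he, Finset.mul_sum]
  push_cast
  rw [map_sum]
  refine Finset.sum_congr rfl fun l _ => ?_
  simp only [map_mul, map_pow, map_add, map_natCast]
  rw [hg]
  have hM : M * y = l.2 * y + (M - l.2) * y := by
    rw [← Nat.add_mul]; congr 1; have := l.2.2; omega
  rw [hM]
  ring

theorem gsF_bound (σ : K →+* ℂ) (M : ℕ) (p : Fin (2 * M ^ 3) × Fin M → 𝓞 K) (P R : ℝ)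
    (hP : ∀ l, house ((p l : 𝓞 K) : K) ≤ P) (hR : 1 ≤ R) (z : ℂ) (hz : ‖z‖ = R) :
    ‖gsF σ M p z‖ ≤ 2 * M ^ 4 * (P * R ^ (2 * M ^ 3) * Real.exp (2 * Real.pi * R) ^ M) := by
  unfold gsF
  refine (norm_sum_le _ _).trans ?_
  refine (Finset.sum_le_card_nsmul _ _ (P * R ^ (2 * M ^ 3) * Real.exp (2 * Real.pi * R) ^ M) ?_).trans (le_of_eq ?_)
  · intro l _
    rw [norm_mul, norm_mul, norm_pow, norm_pow, hz]
    have h1 : ‖σ (p l)‖ ≤ P := (norm_embedding_le_house _ σ).trans (hP l)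
    have hP0 : 0 ≤ P := (norm_nonneg _).trans h1
    have h2 : R ^ (l.1:ℕ) ≤ R ^ (2 * M ^ 3) := pow_le_pow_right₀ hR l.1.2.le
    have h3 : ‖exp (2 * Real.pi * I * z)‖ ≤ Real.exp (2 * Real.pi * R) := by
      refine (Complex.norm_exp_le_exp_norm _).trans ?_
      rw [norm_mul, hz]
      simp [abs_of_pos Real.pi_pos]
    have h4 : ‖exp (2 * Real.pi * I * z)‖ ^ (l.2:ℕ) ≤ Real.exp (2 * Real.pi * R) ^ M :=
      (pow_le_pow_left₀ (norm_nonneg _) h3 _).trans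
        (pow_le_pow_right₀ (Real.one_le_exp (by have := Real.pi_pos; positivity)) l.2.2.le)
    gcongr
  · simp only [Finset.card_univ, Fintype.card_prod, Fintype.card_fin, nsmul_eq_mul]
    push_cast
    ring

theorem gs_house_value (M : ℕ) (p : Fin (2 * M ^ 3) × Fin M → 𝓞 K) (P : ℝ)
    (hP : ∀ l, house ((p l : 𝓞 K) : K) ≤ P)
    (b g : 𝓞 K) (D : ℕ) (H : ℝ)
    (hH : H = 1 + house (b : K) + house (g : K) + D) (n x y : ℕ) (hx : x ≤ n) (hy : y ≤ n)
    (hn : 1 ≤ n) :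
    house ((∑ l, ((x + y * b) ^ (l.1 : ℕ) * (g ^ (l.2:ℕ) * (D : 𝓞 K) ^ (M - (l.2:ℕ))) ^ y) * p l : 𝓞 K) : K)
      ≤ 2 * M ^ 4 * ((H * n) ^ (2 * M ^ 3) * H ^ (M * n) * P) := by
  rw [show ∀ q : 𝓞 K, (q : K) = algebraMap (𝓞 K) K q from fun _ => rfl, map_sum]
  refine (house_sum_le_sum_house _ _).trans ?_
  refine (Finset.sum_le_card_nsmul _ _ ((H * n) ^ (2 * M ^ 3) * H ^ (M * n) * P) ?_).trans (le_of_eq ?_)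
  · intro l _
    rw [map_mul]
    refine (house_mul_le _ _).trans ?_
    have h1 := gs_entry b g D M H hH n x y l.1 l.2 (2 * M ^ 3) hx hy hn l.1.2.le l.2.2.le
    have h2 := hP l
    have h3 := house_nonneg ((p l : 𝓞 K) : K)
    exact mul_le_mul h1 h2 h3 ((house_nonneg _).trans h1)
  · simp only [Finset.card_univ, Fintype.card_prod, Fintype.card_fin, nsmul_eq_mul]
    push_cast
    ring
end

end

section
open Complex NumberField

theorem gs_ring1 (X : ℝ) (a : ℕ) :
    X * X ^ 2 * (X * (X * X ^ 2) * (X ^ (2 * a) * X ^ a)) = X ^ (7 + 3 * a) := by ring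

theorem gs_ring2 (X : ℝ) (a : ℕ) :
    X ^ (10 * a) * X ^ (2 * a) * X ^ a = X ^ (13 * a) := by ring

theorem gs_ring3 (X q : ℝ) (a d : ℕ) :
    X ^ a * (X ^ (13 * a) * q) * (X ^ (13 * a)) ^ d = X ^ ((14 + 13 * d) * a) * q := by
  rw [← pow_mul]; ring

set_option maxHeartbeats 1600000 in
theorem gs_core {K : Type*} [Field K] [NumberField K] (σ : K →+* ℂ) (b g : 𝓞 K) (D : ℕ) (hD : 0 < D)
    (hg : σ g = D * exp (2 * Real.pi * I * σ b))
    (hirr : ∀ x y x' y' : ℕ, (x : ℂ) + y * σ b = x' + y' * σ b → x = x' ∧ y = y') : False := by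
  obtain ⟨C, hC0, hC⟩ := gs_siegel K
  set d := Module.finrank ℚ K with hd
  set h : ℝ := 1 + ‖σ b‖ with hh
  set H : ℝ := 1 + house (b : K) + house (g : K) + D with hH
  have hb0 := house_nonneg (b : K)
  have hg0 := house_nonneg (g : K)
  have hD1 : (1:ℝ) ≤ D := by exact_mod_cast hD
  have hh1 : 1 ≤ h := by have := norm_nonneg (σ b); linarith
  have hH1 : 1 ≤ H := by linarith
  set Θ : ℝ := 2 + C + H + 5 * h + Real.exp (10 * Real.pi * h) with hΘ
  have hE0 := Real.exp_pos (10 * Real.pi * h)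
  have hΘ1 : 1 ≤ Θ := by linarith
  clear_value Θ H h
  obtain ⟨n0, hn0, hasy⟩ := gs_asymp Θ hΘ1 (14 + 13 * d)
  set M := n0 with hM
  have hMM : n0 ≤ M ^ 2 := by rw [sq]; exact Nat.le_mul_self _
  -- Siegel
  set P : ℝ := C * (2 * (M ^ 4 : ℕ)) * ((H * (M ^ 2 : ℕ)) ^ (2 * M ^ 3) * H ^ (M * M ^ 2)) with hP
  have hA0 : 0 ≤ (H * (M ^ 2 : ℕ)) ^ (2 * M ^ 3) * H ^ (M * M ^ 2) := by positivity
  have hP0 : 0 ≤ P := by positivity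
  clear_value P
  obtain ⟨p, hp0, hpz, hpb⟩ := hC (Fin (M ^ 2) × Fin (M ^ 2)) (Fin (2 * M ^ 3) × Fin M) (M ^ 4)
    (fun k l => (((k.1 : ℕ) : 𝓞 K) + ((k.2 : ℕ) : 𝓞 K) * b) ^ (l.1 : ℕ) *
      (g ^ (l.2 : ℕ) * (D : 𝓞 K) ^ (M - (l.2 : ℕ))) ^ (k.2 : ℕ))
    ((H * (M ^ 2 : ℕ)) ^ (2 * M ^ 3) * H ^ (M * M ^ 2)) (by positivity)
    (by simp only [Fintype.card_prod, Fintype.card_fin]; ring)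
    (by simp only [Fintype.card_prod, Fintype.card_fin]; ring)
    (by
      intro h0
      have h1 := congrFun (congrFun h0 (⟨0, by positivity⟩, ⟨0, by positivity⟩)) (⟨0, by positivity⟩, ⟨0, by positivity⟩)
      simp at h1)
    hA0
    (by
      intro k l
      exact gs_entry b g D M H hH (M ^ 2) k.1 k.2 l.1 l.2 (2 * M ^ 3) k.1.2.le k.2.2.le (Nat.one_le_pow _ _ hn0)
        l.1.2.le l.2.2.le)
  rw [← hP] at hpb
  have hbound : ∀ n : ℕ, M ^ 2 ≤ n → 1 ≤ Θ * n ∧ 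
      2 * M ^ 4 * P ≤ (Θ * n) ^ (10 * (M * n)) ∧ (H * n) ^ (2 * M ^ 3) ≤ (Θ * n) ^ (2 * (M * n)) ∧
      H ^ (M * n) ≤ (Θ * n) ^ (M * n) ∧ (D:ℝ) ^ (M * n) ≤ (Θ * n) ^ (M * n) ∧
      (n * h * 5) ^ (2 * M ^ 3) ≤ (Θ * n) ^ (2 * (M * n)) ∧
      Real.exp (2 * Real.pi * (5 * (n * h))) ^ M ≤ (Θ * n) ^ (M * n) := by
    intro n hn
    have hn1 : 1 ≤ n := (Nat.one_le_pow 2 M hn0).trans hn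
    have hnr : (1:ℝ) ≤ n := by exact_mod_cast hn1
    have hX1 : 1 ≤ Θ * n := by nlinarith
    have hMn : M ^ 3 ≤ M * n := by rw [pow_succ']; gcongr
    have hMn1 : 1 ≤ M * n := Nat.mul_pos hn0 hn1
    have hΘX : Θ ≤ Θ * n := by nlinarith
    have hnX : (n:ℝ) ≤ Θ * n := by nlinarith
    have hHn : H * n ≤ Θ * n := by gcongr; linarith
    have hHX : H ≤ Θ * n := by linarith
    have hM2 : (((M ^ 2 : ℕ)) : ℝ) ≤ n := by exact_mod_cast hn
    have hM4 : (M:ℝ) ^ 4 ≤ (Θ * n) ^ 2 := by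
      have : (M:ℝ) ^ 4 = (((M ^ 2 : ℕ)) : ℝ) ^ 2 := by push_cast; ring
      rw [this]
      gcongr
      linarith
    have hHn2 : (H * n) ^ (2 * M ^ 3) ≤ (Θ * n) ^ (2 * (M * n)) :=
      (pow_le_pow_left₀ (by positivity) hHn _).trans (pow_le_pow_right₀ hX1 (by omega))
    refine ⟨hX1, ?_, hHn2, ?_, ?_, ?_, ?_⟩
    · have hPle : P ≤ (Θ * n) * ((Θ * n) * (Θ * n) ^ 2) * ((Θ * n) ^ (2 * (M * n)) * (Θ * n) ^ (M * n)) := by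
        rw [hP]
        push_cast
        push_cast at hM2
        gcongr
        · linarith
        · linarith
        · refine (pow_le_pow_left₀ (by positivity) ?_ _).trans hHn2
          gcongr
        · exact (pow_le_pow_left₀ (by positivity) hHX _).trans (pow_le_pow_right₀ hX1 (by rw [← pow_succ']; omega))
      calc 2 * M ^ 4 * P ≤ (Θ * n) * (Θ * n) ^ 2 * ((Θ * n) * ((Θ * n) * (Θ * n) ^ 2) * ((Θ * n) ^ (2 * (M * n)) * (Θ * n) ^ (M * n))) := by
            gcongr
            linarith
        _ = (Θ * n) ^ (7 + 3 * (M * n)) := gs_ring1 _ _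
        _ ≤ _ := pow_le_pow_right₀ hX1 (by omega)
    · exact pow_le_pow_left₀ (by positivity) hHX _
    · exact pow_le_pow_left₀ (by positivity) (by linarith) _
    · refine (pow_le_pow_left₀ (by positivity) ?_ _).trans (pow_le_pow_right₀ hX1 (show 2 * M ^ 3 ≤ _ by omega))
      have : 5 * h ≤ Θ := by linarith
      nlinarith
    · have : Real.exp (2 * Real.pi * (5 * (n * h))) = Real.exp (10 * Real.pi * h) ^ n := by
        rw [← Real.exp_nat_mul]; congr 1; ring
      rw [this, ← pow_mul, mul_comm n M]
      exact pow_le_pow_left₀ (by positivity) (by linarith) _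
  -- Schwarz estimate
  have hsch : ∀ n : ℕ, M ^ 2 ≤ n → (∀ x y : ℕ, x < n → y < n → gsF σ M p (x + y * σ b) = 0) →
      ∀ w : ℂ, ‖w‖ ≤ n * h → ‖gsF σ M p w‖ ≤ (Θ * n) ^ (13 * (M * n)) * (1 / 2) ^ (n * n) := by
    intro n hn hz w hw
    have hn1 : 1 ≤ n := (Nat.one_le_pow 2 M hn0).trans hn
    have hnr : (1:ℝ) ≤ n := by exact_mod_cast hn1
    obtain ⟨hX1, hb1, -, -, -, hb5, hb6⟩ := hbound n hn
    let s : Finset ℂ := (Finset.range n ×ˢ Finset.range n).image fun q : ℕ × ℕ => (q.1 : ℂ) + q.2 * σ b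
    have hcard : s.card = n * n := by
      rw [Finset.card_image_of_injective, Finset.card_product, Finset.card_range]
      rintro ⟨x, y⟩ ⟨x', y'⟩ hxy
      obtain ⟨h1, h2⟩ := hirr x y x' y' hxy
      rw [h1, h2]
    have := gs_schwarz s (gsF σ M p) (gsF_diff σ M p) (by
        intro z hzs
        obtain ⟨⟨x, y⟩, hq, rfl⟩ := Finset.mem_image.1 hzs
        simp only [Finset.mem_product, Finset.mem_range] at hq
        exact hz x y hq.1 hq.2) (n * h) ((Θ * n) ^ (13 * (M * n))) (by positivity)
      (by
        intro z hzs
        obtain ⟨⟨x, y⟩, hq, rfl⟩ := Finset.mem_image.1 hzs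
        simp only [Finset.mem_product, Finset.mem_range] at hq
        refine (norm_add_le _ _).trans ?_
        rw [norm_mul]
        simp only [Complex.norm_natCast]
        have h1 : (x:ℝ) ≤ n := by exact_mod_cast hq.1.le
        have h2 : (y:ℝ) ≤ n := by exact_mod_cast hq.2.le
        have : (y:ℝ) * ‖σ b‖ ≤ n * ‖σ b‖ := by gcongr
        rw [hh]; linarith)
      (by
        intro z hz
        refine (gsF_bound σ M p P (5 * (n * h)) hpb (by nlinarith) z hz).trans ?_
        calc 2 * (M:ℝ) ^ 4 * (P * (5 * (n * h)) ^ (2 * M ^ 3) * Real.exp (2 * Real.pi * (5 * (n * h))) ^ M)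
            = (2 * M ^ 4 * P) * (n * h * 5) ^ (2 * M ^ 3) * Real.exp (2 * Real.pi * (5 * (n * h))) ^ M := by ring
          _ ≤ (Θ * n) ^ (10 * (M * n)) * (Θ * n) ^ (2 * (M * n)) * (Θ * n) ^ (M * n) := by gcongr
          _ = (Θ * n) ^ (13 * (M * n)) := gs_ring2 _ _) w hw
    rwa [hcard] at this
  have hbox : ∀ n : ℕ, M ^ 2 ≤ n → ∀ x y : ℕ, x < n → y < n → gsF σ M p (x + y * σ b) = 0 := by
    intro n hn
    induction n, hn using Nat.le_induction with
    | base =>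
      intro x y hx hy
      have h1 := hpz (⟨x, hx⟩, ⟨y, hy⟩)
      have h2 := gsF_value σ M p b g D hg x y
      simp only at h1
      rw [h1] at h2
      simp only [map_zero] at h2
      have h3 : (D:ℂ) ^ (M * y) ≠ 0 := pow_ne_zero _ (by exact_mod_cast hD.ne')
      exact (mul_eq_zero.1 h2.symm).resolve_left h3
    | succ n hn ih =>
      intro x y hx hy
      have hn1 : 1 ≤ n := (Nat.one_le_pow 2 M hn0).trans hn
      have hnr : (1:ℝ) ≤ n := by exact_mod_cast hn1
      by_contra hne
      obtain ⟨hX1, hb1, hb2, hb3, hb4, hb5, hb6⟩ := hbound n hn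
      have h2 := gsF_value σ M p b g D hg x y
      have h5 := gs_house_value M p P hpb b g D H hH n x y (by omega) (by omega) hn1
      set ξ : 𝓞 K := ∑ l, ((x + y * b) ^ (l.1 : ℕ) * (g ^ (l.2:ℕ) * (D : 𝓞 K) ^ (M - (l.2:ℕ))) ^ y) * p l with hξ
      have h3 : (D:ℂ) ^ (M * y) ≠ 0 := pow_ne_zero _ (by exact_mod_cast hD.ne')
      have hξ0 : ξ ≠ 0 := by
        intro h0
        rw [h0] at h2
        simp only [map_zero] at h2
        exact (mul_ne_zero h3 hne) h2.symm
      have hhouse : house (ξ : K) ≤ (Θ * n) ^ (13 * (M * n)) := by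
        refine h5.trans ?_
        calc 2 * (M:ℝ) ^ 4 * ((H * n) ^ (2 * M ^ 3) * H ^ (M * n) * P)
            = (2 * M ^ 4 * P) * (H * n) ^ (2 * M ^ 3) * H ^ (M * n) := by ring
          _ ≤ (Θ * n) ^ (10 * (M * n)) * (Θ * n) ^ (2 * (M * n)) * (Θ * n) ^ (M * n) := by gcongr
          _ = (Θ * n) ^ (13 * (M * n)) := gs_ring2 _ _
      have hw : ‖(x:ℂ) + y * σ b‖ ≤ n * h := by
        refine (norm_add_le _ _).trans ?_
        rw [norm_mul]
        simp only [Complex.norm_natCast]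
        have h1 : (x:ℝ) ≤ n := by exact_mod_cast (by omega)
        have h2 : (y:ℝ) ≤ n := by exact_mod_cast (by omega)
        have : (y:ℝ) * ‖σ b‖ ≤ n * ‖σ b‖ := by gcongr
        rw [hh]; linarith
      have h6 := hsch n hn ih _ hw
      have h7 : ‖σ ξ‖ ≤ (Θ * n) ^ (M * n) * ((Θ * n) ^ (13 * (M * n)) * (1 / 2) ^ (n * n)) := by
        rw [h2, norm_mul, norm_pow, Complex.norm_natCast]
        refine mul_le_mul ?_ h6 (norm_nonneg _) (by positivity)
        exact (pow_le_pow_right₀ hD1 (by gcongr; omega)).trans hb4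
      have h8 : 1 ≤ ‖σ ξ‖ * house (ξ : K) ^ (d - 1) := by
        refine le_trans ?_ (norm_norm_le_norm_mul_house_pow (ξ : K) σ)
        have h9 : Algebra.norm ℤ ξ ≠ 0 := by
          rwa [Algebra.norm_ne_zero_iff]
        have h10 : (1:ℤ) ≤ |Algebra.norm ℤ ξ| := Int.one_le_abs h9
        have h11 : Algebra.norm ℚ (ξ : K) = (Algebra.norm ℤ ξ : ℚ) := (Algebra.coe_norm_int ξ).symm
        rw [h11]
        simp only [Int.norm_cast_rat, Int.norm_eq_abs]
        exact_mod_cast h10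
      have h9 := hasy n (hMM.trans hn) M hn
      have h10 : ‖σ ξ‖ * house (ξ : K) ^ (d - 1) ≤
          (Θ * n) ^ (M * n) * ((Θ * n) ^ (13 * (M * n)) * (1 / 2) ^ (n * n)) * ((Θ * n) ^ (13 * (M * n))) ^ d := by
        refine mul_le_mul h7 ?_ (pow_nonneg (house_nonneg _) _) (by positivity)
        refine (pow_le_pow_left₀ (house_nonneg _) hhouse _).trans ?_
        exact pow_le_pow_right₀ (one_le_pow₀ hX1) (by omega)
      have h11 : (Θ * n) ^ (M * n) * ((Θ * n) ^ (13 * (M * n)) * (1 / 2) ^ (n * n)) * ((Θ * n) ^ (13 * (M * n))) ^ d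
          = (Θ * n) ^ ((14 + 13 * d) * (M * n)) * (1 / 2) ^ (n * n) :=
        gs_ring3 _ _ _ _
      rw [h11] at h10
      have h12 : (Θ * n) ^ ((14 + 13 * d) * (M * n)) * (1 / 2) ^ (n * n) < (2:ℝ) ^ (n * n) * (1 / 2) ^ (n * n) := by
        gcongr
      rw [← mul_pow] at h12
      norm_num at h12
      norm_num at h10
      linarith
  have hF0 : ∀ w, gsF σ M p w = 0 := by
    intro w
    rw [← norm_eq_zero]
    refine le_antisymm ?_ (norm_nonneg _)
    refine le_of_forall_pos_le_add fun ε hε => ?_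
    obtain ⟨n1, hn1⟩ := exists_nat_gt (1 / ε)
    obtain ⟨n2, hn2⟩ := exists_nat_ge ‖w‖
    let n := M ^ 2 + n1 + n2
    have hn : M ^ 2 ≤ n := by omega
    have hn1' : 1 ≤ n := (Nat.one_le_pow 2 M hn0).trans hn
    have hnr : (1:ℝ) ≤ n := by exact_mod_cast hn1'
    obtain ⟨hX1, -⟩ := hbound n hn
    have hn2n : (n2 : ℝ) ≤ n := by exact_mod_cast (by omega)
    have hn1n : (n1 : ℝ) ≤ n := by exact_mod_cast (by omega)
    have h1 := hsch n hn (hbox n hn) w (by nlinarith)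
    have h9 := hasy n (hMM.trans hn) M hn
    have hnX : (n:ℝ) ≤ Θ * n := by nlinarith
    have h2 : n * (Θ * n) ^ (13 * (M * n)) ≤ (2:ℝ) ^ (n * n) := by
      refine le_trans ?_ h9.le
      calc n * (Θ * n) ^ (13 * (M * n)) ≤ (Θ * n) * (Θ * n) ^ (13 * (M * n)) := by gcongr
        _ = (Θ * n) ^ (13 * (M * n) + 1) := by ring
        _ ≤ _ := pow_le_pow_right₀ hX1 (by
          have : 1 ≤ M * n := Nat.mul_pos hn0 hn1'
          nlinarith)
    have h3 : (Θ * n) ^ (13 * (M * n)) * (1 / 2) ^ (n * n) ≤ 1 / n := by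
      rw [one_div_pow, mul_one_div, div_le_div_iff₀ (by positivity) (by positivity)]
      linarith
    have h4 : 1 / (n:ℝ) ≤ ε := by
      rw [div_le_iff₀ (by positivity)]
      rw [div_lt_iff₀ hε] at hn1
      nlinarith
    linarith
  apply hp0
  have := gs_indep (2 * M ^ 3) M (fun j k => σ (p (j, k))) (by
    intro z
    have := hF0 z
    unfold gsF at this
    rw [Fintype.sum_prod_type] at this
    exact this)
  funext ⟨j, k⟩
  have h1 := this j k
  rw [map_eq_zero] at h1
  simpa using h1

theorem gs_integral (β : ℂ) (hβ : IsIntegral ℤ β)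
    (hγ : IsAlgebraic ℚ (exp (2 * Real.pi * I * β))) : ∃ q : ℚ, β = q := by
  by_contra hne
  push Not at hne
  set γ := exp (2 * Real.pi * I * β) with hγd
  have hγi : IsAlgebraic ℤ γ := (IsFractionRing.isAlgebraic_iff ℤ ℚ ℂ).2 hγ
  obtain ⟨D0, hD0, hDi⟩ := hγi.exists_integral_multiple
  have hDi' : IsIntegral ℤ (((D0.natAbs : ℕ) : ℂ) * γ) := by
    rw [zsmul_eq_mul] at hDi
    rcases Int.natAbs_eq D0 with h | h
    · rw [h] at hDi; simpa using hDi
    · rw [h] at hDi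
      have := hDi.neg
      simpa using this
  let K := IntermediateField.adjoin ℚ ({β, γ} : Set ℂ)
  have hβQ : IsIntegral ℚ β := hβ.tower_top
  have hfd : FiniteDimensional ℚ K := by
    apply IntermediateField.finiteDimensional_adjoin
    intro x hx
    rcases hx with rfl | rfl
    · exact hβQ
    · exact hγ.isIntegral
  have : NumberField K := { to_charZero := inferInstance, to_finiteDimensional := hfd }
  have hβK : β ∈ K := IntermediateField.subset_adjoin _ _ (by simp)
  have hγK : γ ∈ K := IntermediateField.subset_adjoin _ _ (by simp)
  have hcoe : Function.Injective (algebraMap K ℂ) := (algebraMap K ℂ).injective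
  have hint : ∀ x : K, IsIntegral ℤ (x : ℂ) → IsIntegral ℤ x := fun x hx =>
    (isIntegral_algHom_iff ((algebraMap K ℂ).toIntAlgHom) hcoe).1 hx
  let b : 𝓞 K := ⟨⟨β, hβK⟩, hint _ hβ⟩
  let g : 𝓞 K := ⟨(D0.natAbs : K) * ⟨γ, hγK⟩, hint _ (by push_cast; exact hDi')⟩
  refine gs_core (algebraMap K ℂ) b g D0.natAbs (Int.natAbs_pos.2 hD0) ?_ ?_
  · change (((D0.natAbs : K) * ⟨γ, hγK⟩ : K) : ℂ) = _ * γ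
    push_cast
    rfl
  · intro x y x' y' hxy
    change (x : ℂ) + y * β = x' + y' * β at hxy
    by_cases hy : y = y'
    · subst hy
      refine ⟨?_, rfl⟩
      exact_mod_cast add_right_cancel hxy
    · exfalso
      have hyc : ((y : ℂ) - y') ≠ 0 := sub_ne_zero.2 (by exact_mod_cast hy)
      apply hne (((x' : ℚ) - x) / ((y : ℚ) - y'))
      push_cast
      rw [eq_div_iff hyc]
      linear_combination hxy

theorem gs_main (β : ℂ) (hβ : IsAlgebraic ℚ β)
    (hγ : IsAlgebraic ℚ (exp (2 * Real.pi * I * β))) : ∃ q : ℚ, β = q := by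
  have hβi : IsAlgebraic ℤ β := (IsFractionRing.isAlgebraic_iff ℤ ℚ ℂ).2 hβ
  obtain ⟨D0, hD0, hDi⟩ := hβi.exists_integral_multiple
  have hDi' : IsIntegral ℤ (((D0.natAbs : ℕ) : ℂ) * β) := by
    rw [zsmul_eq_mul] at hDi
    rcases Int.natAbs_eq D0 with h | h
    · rw [h] at hDi; simpa using hDi
    · rw [h] at hDi
      have := hDi.neg
      simpa using this
  obtain ⟨q, hq⟩ := gs_integral _ hDi' (by
    have : exp (2 * Real.pi * I * ((D0.natAbs : ℕ) * β)) = exp (2 * Real.pi * I * β) ^ D0.natAbs := by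
      rw [← Complex.exp_nat_mul]; congr 1; ring
    rw [this]
    exact hγ.pow _)
  refine ⟨q / D0.natAbs, ?_⟩
  have : ((D0.natAbs : ℕ) : ℂ) ≠ 0 := by exact_mod_cast (Int.natAbs_pos.2 hD0).ne'
  push_cast
  rw [eq_div_iff this, ← hq, mul_comm]

end

section
theorem da_ext {A K : Type*} [CommRing A] [IsDomain A] [Field K] [Algebra A K] [IsFractionRing A K]
    (φ : A →+* TrivSqZeroExt K K)
    (hφ : ∀ a, (φ a).fst = algebraMap A K a) :
    ∃ δ : Derivation ℤ K K,
      ∀ a, δ (algebraMap A K a) = (φ a).snd := by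
  have hu : ∀ y : nonZeroDivisors A, IsUnit (φ y) := by
    intro y
    rw [TrivSqZeroExt.isUnit_iff_isUnit_fst, hφ]
    exact IsLocalization.map_units _ y
  let ψ : K →+* TrivSqZeroExt K K := IsLocalization.lift hu
  have hψ : ∀ a, ψ (algebraMap A _ a) = φ a := fun a => IsLocalization.lift_eq hu a
  have hfst : ∀ x, (ψ x).fst = x := by
    have : (TrivSqZeroExt.fstHom K K K : _ →+* _).comp ψ = RingHom.id _ := by
      apply IsLocalization.ringHom_ext (nonZeroDivisors A)
      ext a
      simp [hψ, hφ]
    intro x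
    exact RingHom.congr_fun this x
  refine ⟨Derivation.mk' (AddMonoidHom.toIntLinearMap
    { toFun := fun x => (ψ x).snd
      map_zero' := by simp
      map_add' := by intro x y; simp }) ?_, ?_⟩
  · intro x y
    simp [hfst, mul_comm]
  · intro a
    exact congrArg TrivSqZeroExt.snd (hψ a)

section
variable {K : Type*} [Field K]

/-- the field of constants of a derivation -/
def constSub (δ : Derivation ℤ K K) : Subfield K where
  carrier := {x | δ x = 0}
  mul_mem' := by intro a b ha hb; simp_all
  one_mem' := by simp
  add_mem' := by intro a b ha hb; simp_all
  zero_mem' := by simp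
  neg_mem' := by intro a ha; simp_all
  inv_mem' := by intro a ha; simp_all [Derivation.leibniz_inv]

theorem mem_constSub (δ : Derivation ℤ K K) (x : K) : x ∈ constSub δ ↔ δ x = 0 := Iff.rfl

open Polynomial

theorem da_eval (δ : Derivation ℤ K K) (u : K) (hu : δ u = 1) (P : (constSub δ)[X]) :
    δ (P.eval₂ (constSub δ).subtype u) = (derivative P).eval₂ (constSub δ).subtype u := by
  induction P using Polynomial.induction_on' with
  | add p q hp hq => simp [hp, hq, Polynomial.eval₂_add]
  | monomial n a =>
    have ha : δ (a : K) = 0 := a.2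
    simp [Polynomial.eval₂_monomial, derivative_monomial, ha, hu, Derivation.leibniz_pow]
    ring

theorem da_transc [CharZero K] (δ : Derivation ℤ K K) (u : K) (hu : δ u = 1) :
    ∀ (N : ℕ) (P : (constSub δ)[X]), P.degree < N → P.eval₂ (constSub δ).subtype u = 0 → P = 0 := by
  intro N
  induction N with
  | zero => intro P hP _; simpa using hP
  | succ N ih =>
    intro P hP h0
    by_contra hne
    have h1 := da_eval δ u hu P
    rw [h0, map_zero] at h1
    have h2 : (derivative P).degree < N := by
      have h3 := degree_derivative_lt hne
      rw [degree_eq_natDegree hne] at hP h3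
      have : P.natDegree < N + 1 := by exact_mod_cast hP
      exact lt_of_lt_of_le h3 (by exact_mod_cast Nat.lt_succ_iff.1 this)
    have h3 := ih _ h2 h1.symm
    have h4 := derivative_eq_zero.1 h3
    rw [eq_C_of_natDegree_eq_zero h4] at h0 hne
    simp at h0 hne
    exact hne h0

theorem da_indep [CharZero K] (δ : Derivation ℤ K K) (u r : K) (hu : δ u = 1) (hr0 : r ≠ 0) (hr : δ r = -r) :
    ∀ (s : ℕ) (P : ℕ → (constSub δ)[X]),
      ∑ k ∈ Finset.range s, (P k).eval₂ (constSub δ).subtype u * r ^ k = 0 → ∀ k < s, P k = 0 := by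
  intro s
  induction s with
  | zero => intro P _ k hk; omega
  | succ s ih =>
    have key : ∀ (N : ℕ) (P : ℕ → (constSub δ)[X]), (P s).degree < N →
      ∑ k ∈ Finset.range (s + 1), (P k).eval₂ (constSub δ).subtype u * r ^ k = 0 → ∀ k < s + 1, P k = 0 := by
      intro N
      induction N with
      | zero =>
        intro P hP h0
        have hPs : P s = 0 := by simpa using hP
        rw [Finset.sum_range_succ, hPs] at h0
        simp at h0
        intro k hk
        rcases Nat.lt_succ_iff_lt_or_eq.1 hk with h | rfl
        · exact ih P h0 k h
        · exact hPs
      | succ N ihN =>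
        intro P hP h0
        by_cases hPs : P s = 0
        · rw [Finset.sum_range_succ, hPs] at h0
          simp at h0
          intro k hk
          rcases Nat.lt_succ_iff_lt_or_eq.1 hk with h | rfl
          · exact ih P h0 k h
          · exact hPs
        exfalso
        let P' : ℕ → (constSub δ)[X] := fun k => derivative (P k) + Polynomial.C ((s : constSub δ) - k) * P k
        have h1 : ∑ k ∈ Finset.range (s + 1), (P' k).eval₂ (constSub δ).subtype u * r ^ k = 0 := by
          have h2 := congrArg δ h0
          rw [map_zero, map_sum] at h2
          calc ∑ k ∈ Finset.range (s + 1), (P' k).eval₂ (constSub δ).subtype u * r ^ k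
              = ∑ k ∈ Finset.range (s + 1), (δ ((P k).eval₂ (constSub δ).subtype u * r ^ k) + s * ((P k).eval₂ (constSub δ).subtype u * r ^ k)) := by
                refine Finset.sum_congr rfl fun k _ => ?_
                rw [Derivation.leibniz, da_eval δ u hu, Derivation.leibniz_pow, hr]
                simp only [P', Polynomial.eval₂_add, Polynomial.eval₂_mul, Polynomial.eval₂_C, smul_eq_mul, nsmul_eq_mul]
                have : k * (r ^ (k - 1) * -r) = - (k * r ^ k) := by
                  rcases k with _ | k
                  · simp
                  · rw [Nat.add_sub_cancel]; ring
                rw [this]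
                simp
                ring
            _ = 0 := by rw [Finset.sum_add_distrib, h2, ← Finset.mul_sum, h0]; simp
        have h2 : (P' s).degree < N := by
          have h3 := degree_derivative_lt hPs
          simp only [P', sub_self, Polynomial.C_0, zero_mul, add_zero]
          rw [degree_eq_natDegree hPs] at hP h3
          have : (P s).natDegree < N + 1 := by exact_mod_cast hP
          exact lt_of_lt_of_le h3 (by exact_mod_cast Nat.lt_succ_iff.1 this)
        have h3 := ihN P' h2 h1
        have h4 : ∀ k < s, P k = 0 := by
          intro k hk
          have h5 := h3 k (by omega)
          by_contra hne
          have hc : (s : constSub δ) - k ≠ 0 := sub_ne_zero.2 (by exact_mod_cast hk.ne')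
          have h6 : Polynomial.C ((s : constSub δ) - k) * P k = - derivative (P k) := by
            rw [eq_neg_iff_add_eq_zero, add_comm]; exact h5
          have h7 := degree_derivative_lt hne
          rw [← degree_neg, ← h6, degree_C_mul hc] at h7
          exact lt_irrefl _ h7
        rw [Finset.sum_range_succ, Finset.sum_eq_zero, zero_add] at h0
        · have h8 := (mul_eq_zero.1 h0).resolve_right (pow_ne_zero _ hr0)
          exact hPs (da_transc δ u hu ((P s).natDegree + 1) _ (by
            rw [degree_eq_natDegree hPs]; exact_mod_cast Nat.lt_succ_self _) h8)
        · intro k hk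
          rw [h4 k (Finset.mem_range.1 hk)]
          simp
    intro P h0
    by_cases hPs : P s = 0
    · exact key 0 P (by simp [hPs]) h0
    · exact key ((P s).natDegree + 1) P (by
            rw [degree_eq_natDegree hPs]; exact_mod_cast Nat.lt_succ_self _) h0

theorem da_indep' [CharZero K] (δ : Derivation ℤ K K) (u r : K) (hu : δ u = 1) (hr0 : r ≠ 0) (hr : δ r = -r)
    (Q : (constSub δ)[X][X]) (hQ : Q.eval₂ (eval₂RingHom (constSub δ).subtype u) r = 0) : Q = 0 := by
  rw [eval₂_eq_sum_range] at hQ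
  have h := da_indep δ u r hu hr0 hr (Q.natDegree + 1) (fun k => Q.coeff k) hQ
  ext1 k
  by_cases hk : k < Q.natDegree + 1
  · rw [h k hk]; simp
  · rw [coeff_eq_zero_of_natDegree_lt (by omega)]; simp
end

end

section
theorem da_core {n : ℕ} {K : Type*} [Field K] [CharZero K] (π : MvPolynomial (Fin n) ℂ →+* K)
    (δ : Derivation ℤ K K) (f a b : MvPolynomial (Fin n) ℂ) (i j : Fin n) (hij : i ≠ j)
    (u : Fin n → ℂ) (hui : u i ≠ 0)
    (hf : π f = 0) (ha : π a ≠ 0) (hb : π b ≠ 0)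
    (hw : π (MvPolynomial.C (u i) * MvPolynomial.pderiv j f
      - MvPolynomial.C (u j) * MvPolynomial.pderiv i f) ≠ 0)
    (hC : ∀ c, δ (π (MvPolynomial.C c)) = 0)
    (hX : ∀ l, l ≠ i → l ≠ j → δ (π (MvPolynomial.X l)) = 0)
    (hu : δ (∑ l, π (MvPolynomial.C (u l)) * π (MvPolynomial.X l)) = 1)
    (hr : δ (π b * (π a)⁻¹) = - (π b * (π a)⁻¹)) : False := by
  have hC' : ∀ c, (π.comp MvPolynomial.C) c ∈ constSub δ := hC
  let cc : ℂ →+* constSub δ := (π.comp MvPolynomial.C).codRestrict (constSub δ) hC'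
  have hcc : ∀ c, ((cc c : constSub δ) : K) = π (MvPolynomial.C c) := fun c => rfl
  have hx : ∀ l, ∃ e : constSub δ, l ≠ i → l ≠ j → (e : K) = π (MvPolynomial.X l) := by
    intro l
    by_cases h : l ≠ i ∧ l ≠ j
    · exact ⟨⟨π (MvPolynomial.X l), hX l h.1 h.2⟩, fun _ _ => rfl⟩
    · exact ⟨0, fun h1 h2 => absurd ⟨h1, h2⟩ h⟩
  choose x hx using hx
  set U : K := ∑ l, π (MvPolynomial.C (u l)) * π (MvPolynomial.X l) with hU
  have hUsplit : U = π (MvPolynomial.C (u i)) * π (MvPolynomial.X i)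
      + π (MvPolynomial.C (u j)) * π (MvPolynomial.X j)
      + ∑ l ∈ (Finset.univ.erase i).erase j, ((cc (u l) * x l : constSub δ) : K) := by
    rw [hU, ← Finset.add_sum_erase _ _ (Finset.mem_univ i),
      ← Finset.add_sum_erase _ _ (Finset.mem_erase.2 ⟨hij.symm, Finset.mem_univ j⟩), ← add_assoc]
    congr 1
    refine Finset.sum_congr rfl fun l hl => ?_
    simp only [Finset.mem_erase] at hl
    rw [Subfield.coe_mul, hcc, hx l hl.2.1 hl.1]
  have hcci : π (MvPolynomial.C (u i)) * π (MvPolynomial.C (u i)⁻¹) = 1 := by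
    rw [← map_mul, ← map_mul, mul_inv_cancel₀ hui]; simp
  let _ : Algebra (Polynomial (constSub δ)) K :=
    (Polynomial.eval₂RingHom (constSub δ).subtype U).toAlgebra
  have halg : ∀ P : Polynomial (constSub δ), algebraMap _ K P = P.eval₂ (constSub δ).subtype U :=
    fun P => rfl
  let ev : Polynomial (Polynomial (constSub δ)) →+* K :=
    Polynomial.eval₂RingHom (algebraMap _ K) (π (MvPolynomial.X j))
  let g : Fin n → Polynomial (Polynomial (constSub δ)) := fun l =>
    if l = j then Polynomial.X else if l = i then
      Polynomial.C (Polynomial.C (cc (u i)⁻¹) * (Polynomial.X -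
        Polynomial.C (∑ l ∈ (Finset.univ.erase i).erase j, (cc (u l) * x l))))
        - Polynomial.C (Polynomial.C (cc ((u i)⁻¹ * u j))) * Polynomial.X
    else Polynomial.C (Polynomial.C (x l))
  have hgj : g j = Polynomial.X := by simp [g]
  have hgi : g i = Polynomial.C (Polynomial.C (cc (u i)⁻¹) * (Polynomial.X -
        Polynomial.C (∑ l ∈ (Finset.univ.erase i).erase j, (cc (u l) * x l))))
        - Polynomial.C (Polynomial.C (cc ((u i)⁻¹ * u j))) * Polynomial.X := by simp [g, hij]
  have hgl : ∀ l, l ≠ i → l ≠ j → g l = Polynomial.C (Polynomial.C (x l)) := by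
    intro l h1 h2; simp [g, h1, h2]
  let Ψ : MvPolynomial (Fin n) ℂ →+* Polynomial (Polynomial (constSub δ)) :=
    MvPolynomial.eval₂Hom ((Polynomial.C.comp Polynomial.C).comp cc) g
  have hΨC : ∀ c, Ψ (MvPolynomial.C c) = Polynomial.C (Polynomial.C (cc c)) := by
    intro c; simp [Ψ]
  have hΨX : ∀ l, Ψ (MvPolynomial.X l) = g l := by
    intro l; simp [Ψ]
  have hevCC : ∀ e, ev (Polynomial.C (Polynomial.C e)) = e := by
    intro e; simp [ev, halg]
  have hevX : ev Polynomial.X = π (MvPolynomial.X j) := by simp [ev]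
  have hevCX : ev (Polynomial.C Polynomial.X) = U := by simp [ev, halg]
  have hev : ∀ p, ev (Ψ p) = π p := by
    have : ev.comp Ψ = π := by
      apply MvPolynomial.ringHom_ext
      · intro c
        rw [RingHom.comp_apply, hΨC, hevCC, hcc]
      · intro l
        rw [RingHom.comp_apply, hΨX]
        by_cases hlj : l = j
        · rw [hlj, hgj, hevX]
        by_cases hli : l = i
        · rw [hli, hgi]
          simp only [map_sub, map_mul, hevCC, hevCX, hevX, hcc]
          rw [AddSubmonoidClass.coe_finsetSum, hUsplit]
          simp only [Subfield.coe_mul, hcc]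
          linear_combination (π (MvPolynomial.X i)) * hcci
        · rw [hgl l hli hlj, hevCC, hx l hli hlj]
    intro p
    exact RingHom.congr_fun this p
  have hder : ∀ p, ev (Polynomial.derivative (Ψ p)) =
      π (MvPolynomial.pderiv j p - MvPolynomial.C ((u i)⁻¹ * u j) * MvPolynomial.pderiv i p) := by
    intro p
    induction p using MvPolynomial.induction_on with
    | C c => simp [hΨC]
    | add p q hp hq =>
      rw [map_add, Polynomial.derivative_add, map_add, hp, hq, ← map_add]
      congr 1
      simp only [map_add]; ring
    | mul_X p l hp =>
      have hl : ev (Polynomial.derivative (g l)) = π (MvPolynomial.pderiv j (MvPolynomial.X l)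
        - MvPolynomial.C ((u i)⁻¹ * u j) * MvPolynomial.pderiv i (MvPolynomial.X l)) := by
        by_cases hlj : l = j
        · subst hlj
          rw [hgj, MvPolynomial.pderiv_X_self, MvPolynomial.pderiv_X_of_ne hij.symm]
          simp
        by_cases hli : l = i
        · subst hli
          rw [hgi, MvPolynomial.pderiv_X_self, MvPolynomial.pderiv_X_of_ne hij]
          simp only [Polynomial.derivative_sub, Polynomial.derivative_C, Polynomial.derivative_C_mul,
            Polynomial.derivative_X, zero_sub, mul_one, map_neg, hevCC, hcc]
        · rw [hgl l hli hlj, MvPolynomial.pderiv_X_of_ne hli, MvPolynomial.pderiv_X_of_ne hlj]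
          simp
      rw [map_mul, Polynomial.derivative_mul, map_add, map_mul, map_mul, hp, hΨX, hl, ← hΨX, hev, hev,
        ← map_mul, ← map_mul, ← map_add]
      congr 1
      simp only [Derivation.leibniz, smul_eq_mul]
      ring
  have hF0 : Ψ f ≠ 0 := by
    intro h
    have h1 := hder f
    rw [h, Polynomial.derivative_zero, map_zero] at h1
    apply hw
    have : MvPolynomial.C (u i) * MvPolynomial.pderiv j f
      - MvPolynomial.C (u j) * MvPolynomial.pderiv i f = MvPolynomial.C (u i) *
       (MvPolynomial.pderiv j f - MvPolynomial.C ((u i)⁻¹ * u j) * MvPolynomial.pderiv i f) := by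
      rw [mul_sub, ← mul_assoc, ← MvPolynomial.C_mul, mul_inv_cancel_left₀ hui]
    rw [this, map_mul, ← h1, mul_zero]
  have hAE : ∀ e : constSub δ, IsAlgebraic (Polynomial (constSub δ)) (e : K) := by
    intro e
    have := isAlgebraic_algebraMap (R := Polynomial (constSub δ)) (A := K) (Polynomial.C e)
    rwa [halg, Polynomial.eval₂_C] at this
  have hAU : IsAlgebraic (Polynomial (constSub δ)) U := by
    have := isAlgebraic_algebraMap (R := Polynomial (constSub δ)) (A := K) Polynomial.X
    rwa [halg, Polynomial.eval₂_X] at this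
  have hAC : ∀ c, IsAlgebraic (Polynomial (constSub δ)) (π (MvPolynomial.C c)) := fun c => hAE (cc c)
  have hAj : IsAlgebraic (Polynomial (constSub δ)) (π (MvPolynomial.X j)) := by
    refine ⟨Ψ f, hF0, ?_⟩
    exact (hev f).trans hf
  have hAi : IsAlgebraic (Polynomial (constSub δ)) (π (MvPolynomial.X i)) := by
    have : π (MvPolynomial.X i) = π (MvPolynomial.C (u i)⁻¹) *
        (U - π (MvPolynomial.C (u j)) * π (MvPolynomial.X j)
        - ((∑ l ∈ (Finset.univ.erase i).erase j, (cc (u l) * x l) : constSub δ) : K)) := by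
      rw [hUsplit, AddSubmonoidClass.coe_finsetSum]
      linear_combination (-π (MvPolynomial.X i)) * hcci
    rw [this]
    exact (hAC _).mul ((hAU.sub ((hAC _).mul hAj)).sub (hAE _))
  have hAll : ∀ p, IsAlgebraic (Polynomial (constSub δ)) (π p) := by
    intro p
    induction p using MvPolynomial.induction_on with
    | C c => exact hAC c
    | add p q hp hq => rw [map_add]; exact hp.add hq
    | mul_X p l hp =>
      rw [map_mul]
      refine hp.mul ?_
      by_cases hlj : l = j
      · rw [hlj]; exact hAj
      by_cases hli : l = i
      · rw [hli]; exact hAi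
      rw [← hx l hli hlj]; exact hAE _
  obtain ⟨Q, hQ0, hQ⟩ := (hAll b).mul (hAll a).inv
  exact hQ0 (da_indep' δ U _ hu (mul_ne_zero hb (inv_ne_zero ha)) hr Q hQ)

theorem da_A2' {n : ℕ} (f a b : MvPolynomial (Fin n) ℂ) [(Ideal.span {f}).IsPrime] (K : Type*) [Field K] [Algebra (MvPolynomial (Fin n) ℂ ⧸ Ideal.span {f}) K] [IsFractionRing (MvPolynomial (Fin n) ℂ ⧸ Ideal.span {f}) K] (i j : Fin n) (hij : i ≠ j)
    (u : Fin n → ℂ) (hui : u i ≠ 0)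
    (ha : ¬ f ∣ a) (hb : ¬ f ∣ b)
    (hw : ¬ f ∣ MvPolynomial.C (u i) * MvPolynomial.pderiv j f
      - MvPolynomial.C (u j) * MvPolynomial.pderiv i f)
    (h : f ∣ a * (MvPolynomial.pderiv j f * MvPolynomial.pderiv i b
          - MvPolynomial.pderiv i f * MvPolynomial.pderiv j b)
        - b * (MvPolynomial.pderiv j f * MvPolynomial.pderiv i a
          - MvPolynomial.pderiv i f * MvPolynomial.pderiv j a)
        + a * b * (MvPolynomial.C (u i) * MvPolynomial.pderiv j f
          - MvPolynomial.C (u j) * MvPolynomial.pderiv i f)) : False := by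
  let π : MvPolynomial (Fin n) ℂ →+* K := (algebraMap (MvPolynomial (Fin n) ℂ ⧸ Ideal.span {f}) K).comp (Ideal.Quotient.mk _)
  have hπ : ∀ p, π p = 0 ↔ f ∣ p := by
    intro p
    rw [← Ideal.mem_span_singleton, ← Ideal.Quotient.eq_zero_iff_mem]
    exact map_eq_zero_iff _ (IsFractionRing.injective (MvPolynomial (Fin n) ℂ ⧸ Ideal.span {f}) K)
  have : CharZero K := charZero_of_injective_ringHom (π.comp MvPolynomial.C).injective
  let D : Derivation ℂ (MvPolynomial (Fin n) ℂ) (MvPolynomial (Fin n) ℂ) :=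
    MvPolynomial.pderiv j f • MvPolynomial.pderiv i - MvPolynomial.pderiv i f • MvPolynomial.pderiv j
  have hD : ∀ p, D p = MvPolynomial.pderiv j f * MvPolynomial.pderiv i p
          - MvPolynomial.pderiv i f * MvPolynomial.pderiv j p := by
    intro p; simp [D]
  let φ0 : MvPolynomial (Fin n) ℂ →+* TrivSqZeroExt K K :=
    { toFun := fun p => (π p, π (D p))
      map_one' := by 
        apply TrivSqZeroExt.ext
        · show π 1 = 1
          simp
        · show π (D 1) = 0
          simp
      map_zero' := by
        apply TrivSqZeroExt.ext
        · show π 0 = 0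
          simp
        · show π (D 0) = 0
          simp
      map_mul' := by
        intro p q
        apply TrivSqZeroExt.ext
        · show π (p * q) = π p * π q
          simp
        · show π (D (p * q)) = π p * π (D q) + π (D p) * π q
          simp [mul_comm]
      map_add' := by
        intro p q
        apply TrivSqZeroExt.ext
        · show π (p + q) = π p + π q
          simp
        · show π (D (p + q)) = π (D p) + π (D q)
          simp }
  have hφf : ∀ p ∈ Ideal.span {f}, φ0 p = 0 := by
    have : Ideal.span {f} ≤ RingHom.ker φ0 := by
      rw [Ideal.span_singleton_le_iff_mem, RingHom.mem_ker]
      apply TrivSqZeroExt.ext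
      · show π f = 0
        rw [hπ]
      · show π (D f) = 0
        rw [hD, mul_comm, sub_self, map_zero]
    exact fun p hp => this hp
  let φ : (MvPolynomial (Fin n) ℂ ⧸ Ideal.span {f}) →+* TrivSqZeroExt K K := Ideal.Quotient.lift _ φ0 hφf
  obtain ⟨δ0, hδ0⟩ := da_ext (A := MvPolynomial (Fin n) ℂ ⧸ Ideal.span {f}) (K := K) φ (by
    intro p
    obtain ⟨p, rfl⟩ := Ideal.Quotient.mk_surjective p
    rfl)
  have hδ : ∀ p, δ0 (π p) = π (D p) := fun p => hδ0 _
  set w := MvPolynomial.C (u i) * MvPolynomial.pderiv j f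
      - MvPolynomial.C (u j) * MvPolynomial.pderiv i f with hwdef
  have hw' : π w ≠ 0 := fun h => hw ((hπ _).1 h)
  have ha' : π a ≠ 0 := fun h => ha ((hπ _).1 h)
  have hb' : π b ≠ 0 := fun h => hb ((hπ _).1 h)
  refine da_core π ((π w)⁻¹ • δ0) f a b i j hij u hui ((hπ _).2 dvd_rfl) ha' hb' hw' ?_ ?_ ?_ ?_
  · intro c
    rw [Derivation.smul_apply, hδ, hD]
    simp
  · intro l hli hlj
    rw [Derivation.smul_apply, hδ, hD, MvPolynomial.pderiv_X_of_ne hli, MvPolynomial.pderiv_X_of_ne hlj]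
    simp
  · have : ∑ l, π (MvPolynomial.C (u l)) * π (MvPolynomial.X l)
        = π (∑ l, MvPolynomial.C (u l) * MvPolynomial.X l) := by
      rw [map_sum]; simp
    rw [this, Derivation.smul_apply, hδ, hD]
    have hpd : ∀ k, MvPolynomial.pderiv k (∑ l, MvPolynomial.C (u l) * MvPolynomial.X l)
        = MvPolynomial.C (u k) := by
      intro k
      rw [map_sum, Finset.sum_eq_single k]
      · simp
      · intro l _ hl
        simp [MvPolynomial.pderiv_X_of_ne hl]
      · simp
    rw [hpd, hpd, mul_comm (MvPolynomial.pderiv j f), mul_comm (MvPolynomial.pderiv i f), smul_eq_mul]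
    exact inv_mul_cancel₀ hw'
  · rw [← hD, ← hD] at h
    have h1 := (hπ _).2 h
    simp only [map_add, map_sub, map_mul] at h1
    rw [Derivation.smul_apply, Derivation.leibniz, Derivation.leibniz_inv, hδ, hδ]
    simp only [smul_eq_mul]
    field_simp
    linear_combination h1

theorem da_A2 {n : ℕ} (f a b : MvPolynomial (Fin n) ℂ) (hf : Prime f) (i j : Fin n) (hij : i ≠ j)
    (u : Fin n → ℂ) (hui : u i ≠ 0)
    (ha : ¬ f ∣ a) (hb : ¬ f ∣ b)
    (hw : ¬ f ∣ MvPolynomial.C (u i) * MvPolynomial.pderiv j f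
      - MvPolynomial.C (u j) * MvPolynomial.pderiv i f)
    (h : f ∣ a * (MvPolynomial.pderiv j f * MvPolynomial.pderiv i b
          - MvPolynomial.pderiv i f * MvPolynomial.pderiv j b)
        - b * (MvPolynomial.pderiv j f * MvPolynomial.pderiv i a
          - MvPolynomial.pderiv i f * MvPolynomial.pderiv j a)
        + a * b * (MvPolynomial.C (u i) * MvPolynomial.pderiv j f
          - MvPolynomial.C (u j) * MvPolynomial.pderiv i f)) : False := by
  have hp : (Ideal.span {f}).IsPrime := (Ideal.span_singleton_prime hf.ne_zero).2 hf
  exact da_A2' f a b (FractionRing (MvPolynomial (Fin n) ℂ ⧸ Ideal.span {f})) i j hij u hui ha hb hw h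

end

section
theorem tb_lagrange {E : Type*} [NormedAddCommGroup E] [NormedSpace ℂ E] [CompleteSpace E]
    (f F : E → ℂ) (L F' : E →L[ℂ] ℂ) (z : E) (hf : HasStrictFDerivAt f L z)
    (hF : HasStrictFDerivAt F F' z) (hvan : ∀ y, f y = 0 → F y = 0) (hz : f z = 0)
    (v : E) (hL : L ≠ 0) (hv : L v = 0) : F' v = 0 := by
  let _ : NormedSpace ℝ E := NormedSpace.restrictScalars ℝ ℂ E
  have hf' : HasStrictFDerivAt f (L.restrictScalars ℝ) z := hf.restrictScalars ℝ
  have hF' : HasStrictFDerivAt (fun y => (F y).re) (Complex.reCLM.comp (F'.restrictScalars ℝ)) z :=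
    Complex.reCLM.hasStrictFDerivAt.comp z (hF.restrictScalars ℝ)
  have hext : IsLocalExtrOn (fun y => (F y).re) {x | f x = f z} z := by
    left
    refine Filter.eventually_of_mem self_mem_nhdsWithin ?_
    intro y hy
    change f y = f z at hy
    rw [hz] at hy
    simp [hvan y hy, hvan z hz]
  obtain ⟨Λ, Λ₀, hne, h⟩ := hext.exists_linear_map_of_hasStrictFDerivAt hf' hF'
  have hsurj : Function.Surjective L := by
    obtain ⟨x, hx⟩ : ∃ x, L x ≠ 0 := by
      by_contra! h; exact hL (ContinuousLinearMap.ext h)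
    intro y
    refine ⟨(y / L x) • x, ?_⟩
    simp [hx]
  have h0 : Λ₀ ≠ 0 := by
    rintro rfl
    apply hne
    have : Λ = 0 := by
      ext1 y
      obtain ⟨x, rfl⟩ := hsurj y
      simpa using h x
    rw [this]; rfl
  have key : ∀ x, L x = 0 → (F' x).re = 0 := by
    intro x hx
    have := h x
    simpa [hx, h0] using this
  apply Complex.ext
  · exact key v hv
  · have := key (Complex.I • v) (by simp [hv])
    simpa using this

theorem tb_poly {n : ℕ} (p : MvPolynomial (Fin n) ℂ) (z : Fin n → ℂ) :
    ∃ L : (Fin n → ℂ) →L[ℂ] ℂ, HasStrictFDerivAt (fun z => MvPolynomial.eval z p) L z ∧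
      ∀ i, L (Pi.single i 1) = MvPolynomial.eval z (MvPolynomial.pderiv i p) := by
  induction p using MvPolynomial.induction_on with
  | C c => exact ⟨0, by simpa using hasStrictFDerivAt_const c z, by simp⟩
  | add p q hp hq =>
    obtain ⟨L, h1, h2⟩ := hp
    obtain ⟨L', h1', h2'⟩ := hq
    exact ⟨L + L', by simp only [map_add]; exact h1.add h1', by simp [h2, h2']⟩
  | mul_X p l hp =>
    obtain ⟨L, h1, h2⟩ := hp
    have h3 : HasStrictFDerivAt (fun z : Fin n → ℂ => z l) (ContinuousLinearMap.proj (R := ℂ) l) z :=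
      (ContinuousLinearMap.proj (R := ℂ) (φ := fun _ : Fin n => ℂ) l).hasStrictFDerivAt
    refine ⟨_, by simp only [map_mul, MvPolynomial.eval_X]; exact h1.mul h3, ?_⟩
    intro i
    simp [h2, MvPolynomial.pderiv_X, Pi.single_apply]
    split_ifs <;> simp_all

/-- exponential monomial -/
noncomputable def emz {n : ℕ} (m : Fin n →₀ ℕ) (z : Fin n → ℂ) : ℂ :=
  Complex.exp (2 * Real.pi * Complex.I * ∑ l, (m l : ℂ) * z l)

theorem emz_deriv {n : ℕ} (m : Fin n →₀ ℕ) (z : Fin n → ℂ) :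
    ∃ L : (Fin n → ℂ) →L[ℂ] ℂ, HasStrictFDerivAt (emz m) L z ∧
      ∀ i, L (Pi.single i 1) = 2 * Real.pi * Complex.I * m i * emz m z := by
  have h3 : ∀ l : Fin n, HasStrictFDerivAt (fun z : Fin n → ℂ => z l) (ContinuousLinearMap.proj (R := ℂ) l) z :=
    fun l => (ContinuousLinearMap.proj (R := ℂ) (φ := fun _ : Fin n => ℂ) l).hasStrictFDerivAt
  have h4 := HasStrictFDerivAt.cexp (HasStrictFDerivAt.const_mul (HasStrictFDerivAt.fun_sum (u := Finset.univ)
    fun l _ => (h3 l).const_mul (m l : ℂ)) (2 * Real.pi * Complex.I))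
  refine ⟨_, h4, ?_⟩
  intro i
  simp [emz, Pi.single_apply]
  ring

theorem tb_sum {n : ℕ} (M : Finset (Fin n →₀ ℕ)) (c : (Fin n →₀ ℕ) → MvPolynomial (Fin n) ℂ)
    (z : Fin n → ℂ) :
    ∃ L : (Fin n → ℂ) →L[ℂ] ℂ,
      HasStrictFDerivAt (fun z => ∑ m ∈ M, MvPolynomial.eval z (c m) * emz m z) L z ∧
      ∀ i, L (Pi.single i 1) = ∑ m ∈ M, MvPolynomial.eval z (MvPolynomial.pderiv i (c m)
        + MvPolynomial.C (2 * Real.pi * Complex.I * m i) * c m) * emz m z := by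
  choose A hA hA' using fun m => tb_poly (c m) z
  choose B hB hB' using fun m : Fin n →₀ ℕ => emz_deriv m z
  refine ⟨_, HasStrictFDerivAt.fun_sum (fun m _ => (hA m).mul (hB m)), ?_⟩
  intro i
  rw [sum_apply]
  refine Finset.sum_congr rfl fun m _ => ?_
  simp [hA', hB']
  ring

theorem tb_main {n : ℕ} (f : MvPolynomial (Fin n) ℂ) (M : Finset (Fin n →₀ ℕ))
    (c : (Fin n →₀ ℕ) → MvPolynomial (Fin n) ℂ)
    (hvan : ∀ z, MvPolynomial.eval z f = 0 → ∑ m ∈ M, MvPolynomial.eval z (c m) * emz m z = 0)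
    (z : Fin n → ℂ) (hz : MvPolynomial.eval z f = 0) (i j : Fin n) :
    ∑ m ∈ M, MvPolynomial.eval z (
      MvPolynomial.pderiv j f * (MvPolynomial.pderiv i (c m)
        + MvPolynomial.C (2 * Real.pi * Complex.I * m i) * c m)
      - MvPolynomial.pderiv i f * (MvPolynomial.pderiv j (c m)
        + MvPolynomial.C (2 * Real.pi * Complex.I * m j) * c m)) * emz m z = 0 := by
  obtain ⟨L, hL, hL'⟩ := tb_poly f z
  obtain ⟨G, hG, hG'⟩ := tb_sum M c z
  have key : MvPolynomial.eval z (MvPolynomial.pderiv j f) * G (Pi.single i 1)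
     - MvPolynomial.eval z (MvPolynomial.pderiv i f) * G (Pi.single j 1) = 0 := by
    by_cases hL0 : L = 0
    · rw [← hL', ← hL', hL0]; simp
    · have := tb_lagrange _ _ L G z hL hG hvan hz
        (MvPolynomial.eval z (MvPolynomial.pderiv j f) • Pi.single i 1
          - MvPolynomial.eval z (MvPolynomial.pderiv i f) • Pi.single j 1) hL0 (by
          rw [map_sub, map_smul, map_smul, hL', hL']; simp [mul_comm])
      rw [map_sub, map_smul, map_smul] at this
      exact this
  rw [hG', hG', Finset.mul_sum, Finset.mul_sum, ← Finset.sum_sub_distrib] at key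
  rw [← key]
  refine Finset.sum_congr rfl fun m _ => ?_
  simp only [map_sub, map_mul, map_add]
  ring

end

section
theorem nss_rad {n : ℕ} (g p : MvPolynomial (Fin n) ℂ)
    (h : ∀ z, MvPolynomial.eval z g = 0 → MvPolynomial.eval z p = 0) : ∃ N : ℕ, g ∣ p ^ N := by
  have h1 : p ∈ MvPolynomial.vanishingIdeal ℂ (MvPolynomial.zeroLocus ℂ (Ideal.span {g})) := by
    rw [MvPolynomial.mem_vanishingIdeal_iff]
    intro x hx
    rw [MvPolynomial.mem_zeroLocus_iff] at hx
    have := hx g (Ideal.mem_span_singleton_self g)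
    simp only [MvPolynomial.aeval_eq_eval] at this ⊢
    exact h x this
  rw [MvPolynomial.vanishingIdeal_zeroLocus_eq_radical] at h1
  obtain ⟨N, hN⟩ := h1
  exact ⟨N, Ideal.mem_span_singleton.1 hN⟩

theorem nss {n : ℕ} (f p : MvPolynomial (Fin n) ℂ) (hf : Prime f)
    (h : ∀ z, MvPolynomial.eval z f = 0 → MvPolynomial.eval z p = 0) : f ∣ p := by
  obtain ⟨N, hN⟩ := nss_rad f p h
  exact hf.dvd_of_dvd_pow hN

theorem mc_pderiv_deg {n : ℕ} (f : MvPolynomial (Fin n) ℂ) (i : Fin n) (hf : 0 < f.totalDegree) :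
    (MvPolynomial.pderiv i f).totalDegree < f.totalDegree := by
  have h : (MvPolynomial.pderiv i f).totalDegree ≤ f.totalDegree - 1 := by
    refine Finset.sup_le ?_
    intro m hm
    rw [MvPolynomial.mem_support_iff, MvPolynomial.coeff_pderiv] at hm
    have h1 : m + Finsupp.single i 1 ∈ f.support := by
      rw [MvPolynomial.mem_support_iff]
      intro h; simp [h] at hm
    have h2 := MvPolynomial.le_totalDegree h1
    rw [Finsupp.sum_add_index' (by simp) (by simp)] at h2
    simp at h2
    omega
  omega

theorem mc_w_zero {n : ℕ} (f : MvPolynomial (Fin n) ℂ) (hf : Prime f) (i j : Fin n) (a b : ℂ)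
    (h : f ∣ MvPolynomial.C a * MvPolynomial.pderiv j f - MvPolynomial.C b * MvPolynomial.pderiv i f) :
    MvPolynomial.C a * MvPolynomial.pderiv j f = MvPolynomial.C b * MvPolynomial.pderiv i f := by
  by_contra hne
  have hne' := sub_ne_zero.2 hne
  have hd : 0 < f.totalDegree := by
    rw [Nat.pos_iff_ne_zero]
    intro h0
    rw [MvPolynomial.totalDegree_eq_zero_iff_eq_C] at h0
    apply hf.not_isUnit
    rw [h0]
    apply IsUnit.map
    rw [isUnit_iff_ne_zero]
    intro h1
    rw [h1, map_zero] at h0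
    exact hf.ne_zero h0
  have h1 := MvPolynomial.totalDegree_le_of_dvd_of_isDomain h hne'
  have h2 := MvPolynomial.totalDegree_sub (MvPolynomial.C a * MvPolynomial.pderiv j f) (MvPolynomial.C b * MvPolynomial.pderiv i f)
  have h3 := MvPolynomial.totalDegree_mul (MvPolynomial.C a) (MvPolynomial.pderiv j f)
  have h4 := MvPolynomial.totalDegree_mul (MvPolynomial.C b) (MvPolynomial.pderiv i f)
  simp only [MvPolynomial.totalDegree_C, zero_add] at h3 h4
  have h5 := mc_pderiv_deg f i hd
  have h6 := mc_pderiv_deg f j hd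
  omega

theorem mc_main {n : ℕ} (f : MvPolynomial (Fin n) ℂ) (hf : Prime f) :
    ∀ (N : ℕ) (M : Finset (Fin n →₀ ℕ)) (c : (Fin n →₀ ℕ) → MvPolynomial (Fin n) ℂ),
    M.card ≤ N → M.Nonempty → (∀ m ∈ M, ¬ f ∣ c m) →
    (∀ z, MvPolynomial.eval z f = 0 → ∑ m ∈ M, MvPolynomial.eval z (c m) * emz m z = 0) →
    ∃ u : Fin n → ℤ, u ≠ 0 ∧ ∀ i j, MvPolynomial.C (u i : ℂ) * MvPolynomial.pderiv j f
      = MvPolynomial.C (u j : ℂ) * MvPolynomial.pderiv i f := by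
  intro N
  induction N with
  | zero =>
    intro M c hM hne
    have := hne.card_pos
    omega
  | succ N ih =>
    intro M c hM hne hnd hvan
    obtain ⟨m0, hm0⟩ := hne
    by_cases hm1 : ∃ m1 ∈ M, m1 ≠ m0
    swap
    · exfalso
      push Not at hm1
      have hM : M = {m0} := Finset.eq_singleton_iff_unique_mem.2 ⟨hm0, hm1⟩
      apply hnd m0 hm0
      apply nss f _ hf
      intro z hz
      have := hvan z hz
      rw [hM, Finset.sum_singleton] at this
      exact (mul_eq_zero.1 this).resolve_right (Complex.exp_ne_zero _)
    obtain ⟨m1, hm1, hm10⟩ := hm1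
    -- the eliminated relation
    let dd : Fin n → Fin n → (Fin n →₀ ℕ) → MvPolynomial (Fin n) ℂ := fun i j m =>
      MvPolynomial.pderiv j f * (MvPolynomial.pderiv i (c m)
        + MvPolynomial.C (2 * Real.pi * Complex.I * m i) * c m)
      - MvPolynomial.pderiv i f * (MvPolynomial.pderiv j (c m)
        + MvPolynomial.C (2 * Real.pi * Complex.I * m j) * c m)
    let c' : Fin n → Fin n → (Fin n →₀ ℕ) → MvPolynomial (Fin n) ℂ := fun i j m =>
      c m0 * dd i j m - c m * dd i j m0
    have hc' : ∀ i j z, MvPolynomial.eval z f = 0 →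
        ∑ m ∈ M, MvPolynomial.eval z (c' i j m) * emz m z = 0 := by
      intro i j z hz
      have h1 := tb_main f M c hvan z hz i j
      have h2 := hvan z hz
      have : ∑ m ∈ M, MvPolynomial.eval z (c' i j m) * emz m z =
        MvPolynomial.eval z (c m0) * ∑ m ∈ M, MvPolynomial.eval z (dd i j m) * emz m z
        - MvPolynomial.eval z (dd i j m0) * ∑ m ∈ M, MvPolynomial.eval z (c m) * emz m z := by
        rw [Finset.mul_sum, Finset.mul_sum, ← Finset.sum_sub_distrib]
        refine Finset.sum_congr rfl fun m _ => ?_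
        simp only [c', map_sub, map_mul]
        ring
      rw [this, h1, h2]; simp
    by_cases hex : ∃ i j, ∃ m ∈ M, ¬ f ∣ c' i j m
    · obtain ⟨i, j, m2, hm2, hm2'⟩ := hex
      classical
      refine ih (M.filter fun m => ¬ f ∣ c' i j m) (c' i j) ?_
        ⟨m2, Finset.mem_filter.2 ⟨hm2, hm2'⟩⟩ (fun m hm => (Finset.mem_filter.1 hm).2) ?_
      · have : (M.filter fun m => ¬ f ∣ c' i j m) ⊂ M := by
          rw [Finset.filter_ssubset]
          refine ⟨m0, hm0, ?_⟩
          simp [c']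
        have := Finset.card_lt_card this
        omega
      · intro z hz
        rw [← hc' i j z hz, Finset.sum_filter]
        refine Finset.sum_congr rfl fun m _ => ?_
        split_ifs with h
        · obtain ⟨q, hq⟩ := h
          rw [hq, map_mul, hz]; simp
        · rfl
    push Not at hex
    let u : Fin n → ℂ := fun l => 2 * Real.pi * Complex.I * ((m1 l : ℂ) - m0 l)
    have h2pi : (2 * Real.pi * Complex.I : ℂ) ≠ 0 := Complex.two_pi_I_ne_zero
    have hdvd : ∀ i j, f ∣ c m0 * (MvPolynomial.pderiv j f * MvPolynomial.pderiv i (c m1)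
          - MvPolynomial.pderiv i f * MvPolynomial.pderiv j (c m1))
        - c m1 * (MvPolynomial.pderiv j f * MvPolynomial.pderiv i (c m0)
          - MvPolynomial.pderiv i f * MvPolynomial.pderiv j (c m0))
        + c m0 * c m1 * (MvPolynomial.C (u i) * MvPolynomial.pderiv j f
          - MvPolynomial.C (u j) * MvPolynomial.pderiv i f) := by
      intro i j
      have := hex i j m1 hm1
      convert this using 1
      simp only [c', dd, u, map_mul, map_sub]
      ring
    have key : ∀ i j, u i ≠ 0 → f ∣ MvPolynomial.C (u i) * MvPolynomial.pderiv j f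
      - MvPolynomial.C (u j) * MvPolynomial.pderiv i f := by
      intro i j hui
      by_cases hij : i = j
      · subst hij; simp
      by_contra hw
      exact da_A2 f (c m0) (c m1) hf i j hij u hui (hnd _ hm0) (hnd _ hm1) hw (hdvd i j)
    have key2 : ∀ i j, MvPolynomial.C (u i) * MvPolynomial.pderiv j f
      = MvPolynomial.C (u j) * MvPolynomial.pderiv i f := by
      intro i j
      by_cases hui : u i = 0
      · by_cases huj : u j = 0
        · rw [hui, huj]; simp
        · exact (mc_w_zero f hf j i _ _ (key j i huj)).symm
      · exact mc_w_zero f hf i j _ _ (key i j hui)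
    refine ⟨fun l => (m1 l : ℤ) - m0 l, ?_, ?_⟩
    · intro h
      apply hm10
      ext l
      have := congrFun h l
      simp at this
      omega
    · intro i j
      have h := key2 i j
      have h4 : ∀ l, (MvPolynomial.C (u l) : MvPolynomial (Fin n) ℂ) =
          MvPolynomial.C (2 * Real.pi * Complex.I : ℂ) * MvPolynomial.C (((m1 l : ℤ) - m0 l : ℤ) : ℂ) := by
        intro l
        rw [← MvPolynomial.C_mul]
        push_cast
        rfl
      rw [h4, h4] at h
      have h3 : (MvPolynomial.C (2 * Real.pi * Complex.I : ℂ) : MvPolynomial (Fin n) ℂ) ≠ 0 := by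
        rw [Ne, MvPolynomial.C_eq_zero]
        exact h2pi
      exact mul_left_cancel₀ h3 ((mul_assoc _ _ _).symm.trans (h.trans (mul_assoc _ _ _)))

end

section
theorem dd_const {n : ℕ} (f : MvPolynomial (Fin n) ℂ) (u : Fin n → ℤ) (i0 : Fin n) (hi0 : u i0 ≠ 0)
    (h : ∀ i j, MvPolynomial.C (u i : ℂ) * MvPolynomial.pderiv j f
      = MvPolynomial.C (u j : ℂ) * MvPolynomial.pderiv i f)
    (z v : Fin n → ℂ) (hv : ∑ l, (u l : ℂ) * v l = 0) :
    MvPolynomial.eval (z + v) f = MvPolynomial.eval z f := by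
  have hd : ∀ t : ℂ, HasDerivAt (fun t : ℂ => MvPolynomial.eval (z + t • v) f) 0 t := by
    intro t
    obtain ⟨L, hL, hL'⟩ := tb_poly f (z + t • v)
    have h1 : HasDerivAt (fun t : ℂ => z + t • v) v t := by
      simpa using ((hasDerivAt_id t).smul_const v).const_add z
    have h2 := hL.hasFDerivAt.comp_hasDerivAt t h1
    have h3 : L v = 0 := by
      have hv' : v = ∑ l, v l • (Pi.single l (1 : ℂ) : Fin n → ℂ) := by
        ext k; simp [Pi.single_apply]
      have h4 : (u i0 : ℂ) * L v = 0 := by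
        rw [hv', map_sum, Finset.mul_sum]
        have : ∀ l, (u i0 : ℂ) * L (v l • Pi.single l (1 : ℂ)) =
            (u l : ℂ) * v l * MvPolynomial.eval (z + t • v) (MvPolynomial.pderiv i0 f) := by
          intro l
          rw [map_smul, hL', smul_eq_mul]
          have := congrArg (MvPolynomial.eval (z + t • v)) (h i0 l)
          simp only [map_mul, MvPolynomial.eval_C] at this
          linear_combination (v l) * this
        rw [Finset.sum_congr rfl fun l _ => this l, ← Finset.sum_mul, hv, zero_mul]
      exact (mul_eq_zero.1 h4).resolve_left (by exact_mod_cast hi0)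
    rw [h3] at h2
    exact h2
  have := is_const_of_deriv_eq_zero (𝕜 := ℂ) (fun t => (hd t).differentiableAt) (fun t => (hd t).deriv) 1 0
  simpa using this

theorem dd_hyper {n : ℕ} (f : MvPolynomial (Fin n) ℂ) (hf : Prime f) (u : Fin n → ℤ) (hu : u ≠ 0)
    (h : ∀ i j, MvPolynomial.C (u i : ℂ) * MvPolynomial.pderiv j f
      = MvPolynomial.C (u j : ℂ) * MvPolynomial.pderiv i f) :
    ∃ c : ℂ, ∀ z, MvPolynomial.eval z f = 0 ↔ ∑ l, (u l : ℂ) * z l = c := by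
  obtain ⟨i0, hi0⟩ : ∃ i0, u i0 ≠ 0 := by
    by_contra! h; exact hu (funext h)
  have hi0' : (u i0 : ℂ) ≠ 0 := by exact_mod_cast hi0
  obtain ⟨z0, hz0⟩ : ∃ z0, MvPolynomial.eval z0 f = 0 := by
    by_contra! hne
    have := nss f 1 hf (fun z hz => absurd hz (hne z))
    exact hf.not_isUnit (isUnit_of_dvd_one this)
  have hconst : ∀ z z', ∑ l, (u l : ℂ) * z l = ∑ l, (u l : ℂ) * z' l →
      MvPolynomial.eval z f = MvPolynomial.eval z' f := by
    intro z z' hzz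
    have := dd_const f u i0 hi0 h z' (z - z') (by
      simp only [Pi.sub_apply, mul_sub, Finset.sum_sub_distrib]
      rw [hzz, sub_self])
    simpa using this
  let Φ : Polynomial ℂ := MvPolynomial.eval₂ Polynomial.C
    (fun l => if l = i0 then Polynomial.C (u i0 : ℂ)⁻¹ * Polynomial.X else 0) f
  have hΦ : ∀ t, Φ.eval t = MvPolynomial.eval (fun l => if l = i0 then (u i0 : ℂ)⁻¹ * t else 0) f := by
    intro t
    have : (Polynomial.evalRingHom t).comp (MvPolynomial.eval₂Hom Polynomial.C
      (fun l => if l = i0 then Polynomial.C (u i0 : ℂ)⁻¹ * Polynomial.X else 0)) =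
      MvPolynomial.eval (fun l : Fin n => if l = i0 then (u i0 : ℂ)⁻¹ * t else 0) := by
      apply MvPolynomial.ringHom_ext
      · intro r; simp
      · intro l
        simp only [RingHom.comp_apply, MvPolynomial.eval₂Hom_X', MvPolynomial.eval_X]
        split_ifs <;> simp
    exact RingHom.congr_fun this f
  have hΦ2 : ∀ z, MvPolynomial.eval z f = Φ.eval (∑ l, (u l : ℂ) * z l) := by
    intro z
    rw [hΦ]
    apply hconst
    simp [hi0']
  let c := ∑ l, (u l : ℂ) * z0 l
  have hroot : Φ.IsRoot c := by
    rw [Polynomial.IsRoot, ← hΦ2, hz0]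
  obtain ⟨ψ, hψ⟩ := Polynomial.dvd_iff_isRoot.2 hroot
  let ell : MvPolynomial (Fin n) ℂ := ∑ l, MvPolynomial.C (u l : ℂ) * MvPolynomial.X l
  have hell : ∀ z, MvPolynomial.eval z ell = ∑ l, (u l : ℂ) * z l := by
    intro z; simp [ell]
  have hfac : f = (ell - MvPolynomial.C c) * Polynomial.aeval ell ψ := by
    apply MvPolynomial.funext
    intro z
    rw [hΦ2, hψ]
    have : MvPolynomial.eval z (Polynomial.aeval ell ψ) = ψ.eval (∑ l, (u l : ℂ) * z l) := by
      rw [← hell, Polynomial.aeval_def, Polynomial.hom_eval₂]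
      rw [← Polynomial.eval₂_id]
      congr 1
      ext r
      simp
    rw [map_mul, this]
    simp [hell]
  refine ⟨c, fun z => ?_⟩
  rcases hf.irreducible.isUnit_or_isUnit hfac with h1 | h1
  · exfalso
    have := h1.map (MvPolynomial.eval z0)
    simp [hell, c] at this
  · have h2 := (h1.map (MvPolynomial.eval z)).ne_zero
    rw [hfac, map_mul, mul_eq_zero, or_iff_left h2]
    simp [hell, sub_eq_zero]

theorem dd_prim {n : ℕ} (u : Fin n → ℤ) (hu : u ≠ 0) :
    ∃ (g : ℤ) (v b : Fin n → ℤ), g ≠ 0 ∧ (∀ i, u i = g * v i) ∧ ∑ i, b i * v i = 1 := by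
  obtain ⟨g, hg⟩ := (IsPrincipalIdealRing.principal (Ideal.span (Set.range u))).principal
  have h1 : ∀ i, g ∣ u i := by
    intro i
    rw [← Ideal.mem_span_singleton]
    have : u i ∈ Ideal.span (Set.range u) := Ideal.subset_span ⟨i, rfl⟩
    rw [hg] at this
    exact this
  choose v hv using h1
  have hg0 : g ≠ 0 := by
    rintro rfl
    exact hu (funext fun i => by simp [hv i])
  have h2 : g ∈ Ideal.span (Set.range u) := by
    rw [hg]; exact Ideal.mem_span_singleton_self g
  obtain ⟨b, hb⟩ := Ideal.mem_span_range_iff_exists_fun.1 h2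
  refine ⟨g, v, b, hg0, hv, ?_⟩
  apply mul_left_cancel₀ hg0
  rw [Finset.mul_sum, mul_one]
  conv_rhs => rw [← hb]
  refine Finset.sum_congr rfl fun i _ => ?_
  rw [hv i]; ring

theorem dd_main {n : ℕ} (f : MvPolynomial (Fin n) ℂ) (hf : Prime f) (u : Fin n → ℤ) (hu : u ≠ 0)
    (h : ∀ i j, MvPolynomial.C (u i : ℂ) * MvPolynomial.pderiv j f
      = MvPolynomial.C (u j : ℂ) * MvPolynomial.pderiv i f) :
    ∃ (v b : Fin n → ℤ) (c : ℂ), ∑ i, b i * v i = 1 ∧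
      ∀ z, MvPolynomial.eval z f = 0 ↔ ∑ l, (v l : ℂ) * z l = c := by
  obtain ⟨c, hc⟩ := dd_hyper f hf u hu h
  obtain ⟨g, v, b, hg, hv, hb⟩ := dd_prim u hu
  have hg' : (g : ℂ) ≠ 0 := by exact_mod_cast hg
  refine ⟨v, b, c / g, hb, fun z => ?_⟩
  rw [hc, eq_div_iff hg', Finset.sum_mul]
  have : ∑ l, (u l : ℂ) * z l = ∑ l, (v l : ℂ) * z l * g := by
    refine Finset.sum_congr rfl fun l _ => ?_
    rw [hv l]; push_cast; ring
  rw [this]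

theorem ee_lem {n : ℕ} (p : MvPolynomial (Fin n) ℂ) (hp : ∀ m, IsAlgebraic ℚ (MvPolynomial.coeff m p))
    (i0 : Fin n)
    (h : ∀ x : Fin n → ℂ, (∀ l, IsAlgebraic ℚ (x l) ∧ x l ≠ 0) →
      ∃ t, Transcendental ℚ t ∧ MvPolynomial.eval (Function.update x i0 t) p = 0) : p = 0 := by
  let Qb := algebraicClosure ℚ ℂ
  obtain ⟨p', hp'⟩ : ∃ p' : MvPolynomial (Fin n) Qb, MvPolynomial.map (algebraMap Qb ℂ) p' = p := by
    have : p ∈ Set.range (MvPolynomial.map (σ := Fin n) (algebraMap Qb ℂ)) := by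
      rw [MvPolynomial.mem_range_map_iff_coeffs_subset]
      intro y hy
      rw [Finset.mem_coe, MvPolynomial.mem_coeffs_iff] at hy
      obtain ⟨m, hm, rfl⟩ := hy
      exact ⟨⟨_, (mem_algebraicClosure_iff).2 (hp m)⟩, rfl⟩
    exact this
  have key : ∀ x ∈ Set.pi Set.univ (fun _ : Fin n => {y : ℂ | IsAlgebraic ℚ y ∧ y ≠ 0}),
      MvPolynomial.eval x p = 0 := by
    intro x hx
    have hx' : ∀ l, IsAlgebraic ℚ (x l) ∧ x l ≠ 0 := fun l => hx l (Set.mem_univ l)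
    obtain ⟨t, ht, h0⟩ := h x hx'
    let y : Fin n → Qb := fun l => ⟨x l, (mem_algebraicClosure_iff).2 (hx' l).1⟩
    let q : Polynomial Qb := MvPolynomial.eval₂ Polynomial.C
      (fun l => if l = i0 then Polynomial.X else Polynomial.C (y l)) p'
    have hq : ∀ s : ℂ, Polynomial.aeval s q = MvPolynomial.eval (Function.update x i0 s) p := by
      intro s
      rw [← hp', MvPolynomial.eval_map]
      have : ((Polynomial.aeval s : Polynomial Qb →ₐ[Qb] ℂ) : Polynomial Qb →+* ℂ).comp
        (MvPolynomial.eval₂Hom Polynomial.C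
        (fun l => if l = i0 then Polynomial.X else Polynomial.C (y l))) =
        MvPolynomial.eval₂Hom (algebraMap Qb ℂ) (Function.update x i0 s) := by
        apply MvPolynomial.ringHom_ext
        · intro r; simp
        · intro l
          simp only [RingHom.comp_apply, MvPolynomial.eval₂Hom_X', Function.update_apply]
          split_ifs
          · simp
          · simp [y]
      exact RingHom.congr_fun this p'
    have hq0 : q = 0 := by
      by_contra hne
      apply ht
      have h1 : IsAlgebraic Qb t := ⟨q, hne, by rw [hq, h0]⟩
      have : Algebra.IsAlgebraic ℚ Qb := algebraicClosure.isAlgebraic ℚ ℂ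
      exact IsAlgebraic.restrictScalars ℚ h1
    have h1 := hq (x i0)
    rw [hq0, map_zero, Function.update_eq_self] at h1
    exact h1.symm
  refine MvPolynomial.funext_set (fun _ : Fin n => {y : ℂ | IsAlgebraic ℚ y ∧ y ≠ 0}) ?_ ?_
  · intro l
    refine Set.infinite_of_injective_forall_mem (f := fun k : ℕ => ((k + 1 : ℕ) : ℂ)) ?_ ?_
    · intro a b hab
      simpa using hab
    · intro k
      refine ⟨?_, ?_⟩
      · have := isAlgebraic_algebraMap (R := ℚ) (A := ℂ) ((k + 1 : ℕ) : ℚ)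
        simpa using this
      · exact_mod_cast Nat.succ_ne_zero k
  · intro x hx
    rw [key x hx, map_zero]

end

section
open MvPolynomial

theorem g1_core {n : ℕ} (k : ℕ) (p q : MvPolynomial (Fin n) ℂ)
    (h : ∀ x : Fin n → ℂ, (∀ i, x i ≠ 0) → (∀ i : Fin n, k ≤ (i : ℕ) → x i = 1) →
      eval x p * eval x q = 0) :
    (∀ x : Fin n → ℂ, (∀ i : Fin n, k ≤ (i : ℕ) → x i = 1) → eval x p = 0) ∨
    (∀ x : Fin n → ℂ, (∀ i : Fin n, k ≤ (i : ℕ) → x i = 1) → eval x q = 0) := by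
  let σ : MvPolynomial (Fin n) ℂ → MvPolynomial (Fin n) ℂ := fun p =>
    bind₁ (fun i : Fin n => if k ≤ (i : ℕ) then 1 else X i) p
  have hσ : ∀ p x, eval x (σ p) = eval (fun i : Fin n => if k ≤ (i : ℕ) then 1 else x i) p := by
    intro p x
    simp only [σ]
    rw [← coe_aeval_eq_eval, AlgHom.coe_toRingHom, aeval_bind₁, ← aeval_eq_eval]
    congr 2
    ext i
    split_ifs <;> simp
  have hz : σ p * σ q * ∏ i, X i = 0 := by
    apply MvPolynomial.funext
    intro x
    simp only [map_mul, map_prod, eval_X, map_zero, hσ]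
    by_cases hx : ∀ i, x i ≠ 0
    · rw [h _ _ _, zero_mul]
      · intro i; split_ifs
        · simp
        · exact hx i
      · intro i hi; simp [hi]
    · push Not at hx
      obtain ⟨i, hi⟩ := hx
      rw [Finset.prod_eq_zero (Finset.mem_univ i) hi, mul_zero]
  have hprod : (∏ i, X i : MvPolynomial (Fin n) ℂ) ≠ 0 :=
    Finset.prod_ne_zero_iff.2 fun i _ => X_ne_zero i
  have hfix : ∀ p x, (∀ i : Fin n, k ≤ (i : ℕ) → x i = 1) → eval x p = eval x (σ p) := by
    intro p x hx
    rw [hσ]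
    congr 2
    ext i
    split_ifs with hi
    · exact hx i hi
    · rfl
  rcases mul_eq_zero.1 ((mul_eq_zero.1 hz).resolve_right hprod) with h1 | h1
  · left; intro x hx; rw [hfix p x hx, h1, map_zero]
  · right; intro x hx; rw [hfix q x hx, h1, map_zero]

theorem g1_univ (n : ℕ) : (n : ℕ∞) ≤ dimOf (ZClosed n) (Set.univ) := by
  apply le_sSup
  refine ⟨n, rfl, fun k => {x | ∀ i : Fin n, (k : ℕ) ≤ (i : ℕ) → x i = 1}, ?_, ?_⟩
  · intro k
    refine ⟨⟨{p | ∃ i : Fin n, (k : ℕ) ≤ i ∧ p = X i - 1}, ?_⟩, ⟨⟨1, fun i _ => rfl⟩, ?_⟩,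
      Set.subset_univ _⟩
    · ext x
      constructor
      · rintro hx _ ⟨i, hi, rfl⟩
        simp [hx i hi]
      · intro hx i hi
        have := hx _ ⟨i, hi, rfl⟩
        simpa [sub_eq_zero] using this
    · rintro F G ⟨P, rfl⟩ ⟨Q, rfl⟩ hFG
      by_contra! hne
      obtain ⟨h1, h2⟩ := hne
      rw [Set.not_subset] at h1 h2
      obtain ⟨a, ha, ha'⟩ := h1
      obtain ⟨b, hb, hb'⟩ := h2
      have ha2 : ∃ p ∈ P, eval a p ≠ 0 := by
        by_contra! h; exact ha' h
      have hb2 : ∃ p ∈ Q, eval b p ≠ 0 := by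
        by_contra! h; exact hb' h
      obtain ⟨p, hp, hpa⟩ := ha2
      obtain ⟨q, hq, hqb⟩ := hb2
      rcases g1_core (k : ℕ) p q (by
        intro x _ hx
        rcases hFG (show x ∈ _ from hx) with h | h
        · rw [h p hp, zero_mul]
        · rw [h q hq, mul_zero]) with h | h
      · exact hpa (h a ha)
      · exact hqb (h b hb)
  · intro i j hij
    have hij' : (i : ℕ) < j := hij
    have hi : (i : ℕ) < n := by omega
    refine (Set.ssubset_iff_of_subset ?_).2 ?_
    · intro x hx l hl
      exact hx l (by omega)
    refine ⟨Function.update 1 ⟨i, hi⟩ 2, ?_, ?_⟩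
    · intro l hl
      rw [Function.update_of_ne]
      · rfl
      · intro h; rw [h] at hl; simp at hl; omega
    · intro h
      have := h ⟨i, hi⟩ le_rfl
      simp at this

theorem g1_torus (n : ℕ) : (n : ℕ∞) ≤ dimOf (ZClosedTorus n) {x | ∀ i, x i ≠ 0} := by
  apply le_sSup
  refine ⟨n, rfl, fun k => {x | (∀ i, x i ≠ 0) ∧ ∀ i : Fin n, (k : ℕ) ≤ (i : ℕ) → x i = 1}, ?_, ?_⟩
  · intro k
    refine ⟨⟨{p | ∃ i : Fin n, (k : ℕ) ≤ i ∧ p = X i - 1}, ?_⟩, ⟨⟨1, by simp, fun i _ => rfl⟩, ?_⟩,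
      fun x hx => hx.1⟩
    · ext x
      constructor
      · rintro ⟨hx0, hx⟩
        refine ⟨hx0, ?_⟩
        rintro _ ⟨i, hi, rfl⟩
        simp [hx i hi]
      · rintro ⟨hx0, hx⟩
        refine ⟨hx0, fun i hi => ?_⟩
        have := hx _ ⟨i, hi, rfl⟩
        simpa [sub_eq_zero] using this
    · rintro F G ⟨P, rfl⟩ ⟨Q, rfl⟩ hFG
      by_contra! hne
      obtain ⟨h1, h2⟩ := hne
      rw [Set.not_subset] at h1 h2
      obtain ⟨a, ha, ha'⟩ := h1
      obtain ⟨b, hb, hb'⟩ := h2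
      have ha2 : ∃ p ∈ P, eval a p ≠ 0 := by
        by_contra! h; exact ha' ⟨ha.1, h⟩
      have hb2 : ∃ p ∈ Q, eval b p ≠ 0 := by
        by_contra! h; exact hb' ⟨hb.1, h⟩
      obtain ⟨p, hp, hpa⟩ := ha2
      obtain ⟨q, hq, hqb⟩ := hb2
      rcases g1_core (k : ℕ) p q (by
        intro x hx0 hx
        rcases hFG (show x ∈ _ from ⟨hx0, hx⟩) with h | h
        · rw [h.2 p hp, zero_mul]
        · rw [h.2 q hq, mul_zero]) with h | h
      · exact hpa (h a ha.2)
      · exact hqb (h b hb.2)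
  · intro i j hij
    have hij' : (i : ℕ) < j := hij
    have hi : (i : ℕ) < n := by omega
    refine (Set.ssubset_iff_of_subset ?_).2 ?_
    · intro x hx
      exact ⟨hx.1, fun l hl => hx.2 l (by omega)⟩
    refine ⟨Function.update 1 ⟨i, hi⟩ 2, ⟨?_, ?_⟩, ?_⟩
    · intro l
      rw [Function.update_apply]
      split_ifs <;> simp
    · intro l hl
      rw [Function.update_of_ne]
      · rfl
      · intro h; rw [h] at hl; simp at hl; omega
    · intro h
      have := h.2 ⟨i, hi⟩ le_rfl
      simp at this

theorem g1_mem {n : ℕ} (S : Set (Fin n → ℂ)) (p : MvPolynomial (Fin n) ℂ) :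
    p ∈ vanishingIdeal ℂ S ↔ ∀ z ∈ S, eval z p = 0 := by
  rw [mem_vanishingIdeal_iff]
  simp only [aeval_eq_eval]

theorem g1_prime {n : ℕ} (S : Set (Fin n → ℂ)) (hS : IsIrrOf (ZClosed n) S) :
    (vanishingIdeal ℂ S : Ideal (MvPolynomial (Fin n) ℂ)).IsPrime := by
  obtain ⟨⟨z, hz⟩, h⟩ := hS
  refine ⟨?_, ?_⟩
  · intro h1
    have : (1 : MvPolynomial (Fin n) ℂ) ∈ vanishingIdeal ℂ S := by rw [h1]; trivial
    rw [g1_mem] at this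
    simpa using this z hz
  · intro p q hpq
    rw [g1_mem] at hpq
    rcases h {z | eval z p = 0} {z | eval z q = 0} ⟨{p}, by simp⟩ ⟨{q}, by simp⟩ (by
      intro x hx
      have := hpq x hx
      rw [map_mul, mul_eq_zero] at this
      exact this) with h1 | h1
    · left; rw [g1_mem]; exact h1
    · right; rw [g1_mem]; exact h1

theorem g1_prime_torus {n : ℕ} (S : Set (Fin n → ℂ)) (hS : IsIrrOf (ZClosedTorus n) S)
    (hS0 : ∀ z ∈ S, ∀ i, z i ≠ 0) :
    (vanishingIdeal ℂ S : Ideal (MvPolynomial (Fin n) ℂ)).IsPrime := by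
  obtain ⟨⟨z, hz⟩, h⟩ := hS
  refine ⟨?_, ?_⟩
  · intro h1
    have : (1 : MvPolynomial (Fin n) ℂ) ∈ vanishingIdeal ℂ S := by rw [h1]; trivial
    rw [g1_mem] at this
    simpa using this z hz
  · intro p q hpq
    rw [g1_mem] at hpq
    rcases h {z | (∀ i, z i ≠ 0) ∧ eval z p = 0} {z | (∀ i, z i ≠ 0) ∧ eval z q = 0}
      ⟨{p}, by simp⟩ ⟨{q}, by simp⟩ (by
      intro x hx
      have := hpq x hx
      rw [map_mul, mul_eq_zero] at this
      rcases this with h | h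
      · left; exact ⟨hS0 x hx, h⟩
      · right; exact ⟨hS0 x hx, h⟩) with h1 | h1
    · left; rw [g1_mem]; exact fun z hz => (h1 hz).2
    · right; rw [g1_mem]; exact fun z hz => (h1 hz).2

theorem g1_eq {n : ℕ} (hn : 2 ≤ n) (S : Set (Fin n → ℂ)) (hS : ZClosed n S)
    (hdim : dimOf (ZClosed n) S = ((n - 1 : ℕ) : ℕ∞)) (f : MvPolynomial (Fin n) ℂ) (hf : Prime f)
    (hSf : ∀ z ∈ S, eval z f = 0) (z : Fin n → ℂ) (hz : eval z f = 0) : z ∈ S := by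
  by_contra hzS
  have h1 : ((n - 2 : ℕ) : ℕ∞) < dimOf (ZClosed n) S := by
    rw [hdim]
    exact_mod_cast (by omega : n - 2 < n - 1)
  obtain ⟨e, ⟨d, rfl, Z, hZ, hZlt⟩, hd⟩ := lt_sSup_iff.1 h1
  have hd' : n - 2 < d := by exact_mod_cast hd
  have hlt : ∀ i j : Fin (d + 1), i < j →
      (vanishingIdeal ℂ (Z j) : Ideal (MvPolynomial (Fin n) ℂ)) < vanishingIdeal ℂ (Z i) := by
    intro i j hij
    rw [lt_iff_le_not_ge]
    refine ⟨vanishingIdeal_anti_mono (hZlt i j hij).1, fun hle => ?_⟩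
    obtain ⟨w, hw, hwi⟩ := Set.exists_of_ssubset (hZlt i j hij)
    obtain ⟨P, hP⟩ := (hZ i).1
    apply hwi
    rw [hP]
    intro p hp
    refine (g1_mem _ _).1 (hle ((g1_mem _ _).2 ?_)) w hw
    intro y hy
    rw [hP] at hy
    exact hy p hp
  let s0 : LTSeries (PrimeSpectrum (MvPolynomial (Fin n) ℂ)) :=
    { length := d
      toFun := fun k => ⟨vanishingIdeal ℂ (Z k.rev), g1_prime _ (hZ _).2.1⟩
      step := by
        intro k
        exact hlt _ _ (Fin.rev_lt_rev.2 (Fin.castSucc_lt_succ)) }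
  have hp : (Ideal.span {f}).IsPrime := (Ideal.span_singleton_prime hf.ne_zero).2 hf
  have hfS : Ideal.span {f} < (vanishingIdeal ℂ (Z (Fin.last d)) : Ideal (MvPolynomial (Fin n) ℂ)) := by
    rw [lt_iff_le_not_ge]
    constructor
    · rw [Ideal.span_singleton_le_iff_mem, g1_mem]
      intro y hy
      exact hSf y ((hZ _).2.2 hy)
    · intro hle
      obtain ⟨P, hP⟩ := hS
      apply hzS
      rw [hP]
      intro p hp
      have : p ∈ Ideal.span {f} := hle ((g1_mem _ _).2 (by
        intro y hy
        have := (hZ _).2.2 hy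
        rw [hP] at this
        exact this p hp))
      obtain ⟨q, rfl⟩ := Ideal.mem_span_singleton.1 this
      rw [map_mul, hz, zero_mul]
  let s1 := s0.cons ⟨Ideal.span {f}, hp⟩ (by
    show Ideal.span {f} < vanishingIdeal ℂ (Z (Fin.rev 0))
    rw [Fin.rev_zero]
    exact hfS)
  let s2 := s1.cons ⟨⊥, Ideal.isPrime_bot⟩ (by
    rw [RelSeries.head_cons]
    show (⊥ : Ideal _) < Ideal.span {f}
    rw [bot_lt_iff_ne_bot, Ne, Ideal.span_singleton_eq_bot]
    exact hf.ne_zero)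
  have hlen : s2.length = d + 2 := by
    show 0 + (0 + d + 1) + 1 = d + 2
    omega
  have h2 := Order.LTSeries.length_le_krullDim s2
  have h3 : ringKrullDim (MvPolynomial (Fin n) ℂ) = n := by
    rw [MvPolynomial.ringKrullDim_of_isNoetherianRing]
    simp
  rw [ringKrullDim] at h3
  rw [h3, hlen] at h2
  have : d + 2 ≤ n := by exact_mod_cast h2
  omega

end

section
open MvPolynomial

theorem g2_S {n : ℕ} (hn : 2 ≤ n) (S : Set (Fin n → ℂ))
    (hSclosed : ZClosedQbar n S) (hSirr : IsIrrOf (ZClosed n) S)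
    (hSdim : dimOf (ZClosed n) S = ((n - 1 : ℕ) : ℕ∞)) :
    ∃ f : MvPolynomial (Fin n) ℂ, Prime f ∧ ∀ z, z ∈ S ↔ eval z f = 0 := by
  obtain ⟨P, hP, hS⟩ := hSclosed
  have hSc : ZClosed n S := ⟨P, hS⟩
  have hprime := g1_prime S hSirr
  have hne : (vanishingIdeal ℂ S : Ideal (MvPolynomial (Fin n) ℂ)) ≠ ⊥ := by
    intro hbot
    have : S = Set.univ := by
      rw [Set.eq_univ_iff_forall]
      intro z
      rw [hS]
      intro p hp
      have : p ∈ (vanishingIdeal ℂ S : Ideal (MvPolynomial (Fin n) ℂ)) := by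
        rw [g1_mem]
        intro y hy
        rw [hS] at hy
        exact hy p hp
      rw [hbot, Ideal.mem_bot] at this
      rw [this, map_zero]
    have h1 := g1_univ n
    rw [← this, hSdim] at h1
    have : n ≤ n - 1 := by exact_mod_cast h1
    omega
  obtain ⟨f, hfS, hf⟩ := hprime.exists_mem_prime_of_ne_bot hne
  rw [g1_mem] at hfS
  exact ⟨f, hf, fun z => ⟨hfS z, fun hz => g1_eq hn S hSc hSdim f hf hfS z hz⟩⟩

theorem g2_Tne {n : ℕ} (hn : 2 ≤ n) (T : Set (Fin n → ℂ)) (hTdim : dimOf (ZClosedTorus n) T = ((n - 1 : ℕ) : ℕ∞)) :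
    T ≠ {x | ∀ i, x i ≠ 0} := by
  intro h
  have h1 := g1_torus n
  rw [← h, hTdim] at h1
  have : n ≤ n - 1 := by exact_mod_cast h1
  omega

theorem g2_T {n : ℕ} (hn : 2 ≤ n) (T : Set (Fin n → ℂ))
    (hTclosed : ZClosedTorusQbar n T) (hTirr : IsIrrOf (ZClosedTorus n) T)
    (hTdim : dimOf (ZClosedTorus n) T = ((n - 1 : ℕ) : ℕ∞)) :
    ∃ g : MvPolynomial (Fin n) ℂ, Prime g ∧ ∀ z ∈ T, eval z g = 0 := by
  obtain ⟨P, hP, hT⟩ := hTclosed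
  have hprime := g1_prime_torus T hTirr (by intro z hz; rw [hT] at hz; exact hz.1)
  have hne : (vanishingIdeal ℂ T : Ideal (MvPolynomial (Fin n) ℂ)) ≠ ⊥ := by
    intro hbot
    apply g2_Tne hn T hTdim
    ext z
    constructor
    · intro hz; rw [hT] at hz; exact hz.1
    · intro hz
      rw [hT]
      refine ⟨hz, fun p hp => ?_⟩
      have : p ∈ (vanishingIdeal ℂ T : Ideal (MvPolynomial (Fin n) ℂ)) := by
        rw [g1_mem]
        intro y hy
        rw [hT] at hy
        exact hy.2 p hp
      rw [hbot, Ideal.mem_bot] at this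
      rw [this, map_zero]
  obtain ⟨g, hgT, hg⟩ := hprime.exists_mem_prime_of_ne_bot hne
  rw [g1_mem] at hgT
  exact ⟨g, hg, hgT⟩

theorem g2_eval_exp {n : ℕ} (g : MvPolynomial (Fin n) ℂ) (z : Fin n → ℂ) :
    eval (expMap n z) g = ∑ m ∈ g.support, eval z (C (coeff m g)) * emz m z := by
  rw [eval_eq']
  refine Finset.sum_congr rfl fun m _ => ?_
  rw [eval_C]
  congr 1
  simp only [expMap, emz, ← Complex.exp_nat_mul]
  rw [← Complex.exp_sum, Finset.mul_sum]
  congr 1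
  refine Finset.sum_congr rfl fun l _ => ?_
  ring

theorem g2_hyper {n : ℕ} (f g : MvPolynomial (Fin n) ℂ) (hf : Prime f) (hg : Prime g)
    (h : ∀ z, eval z f = 0 → eval (expMap n z) g = 0) :
    ∃ (v b : Fin n → ℤ) (c : ℂ), ∑ i, b i * v i = 1 ∧
      ∀ z, MvPolynomial.eval z f = 0 ↔ ∑ l, (v l : ℂ) * z l = c := by
  obtain ⟨u, hu, hu'⟩ := mc_main f hf g.support.card g.support (fun m => C (coeff m g)) le_rfl
    (by rw [Finset.nonempty_iff_ne_empty, Ne, MvPolynomial.support_eq_empty]; exact hg.ne_zero)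
    (by
      intro m hm hdvd
      apply hf.not_isUnit
      refine isUnit_of_dvd_unit hdvd (IsUnit.map _ ?_)
      rw [isUnit_iff_ne_zero]
      exact mem_support_iff.1 hm)
    (by
      intro z hz
      rw [← g2_eval_exp]; exact h z hz)
  exact dd_main f hf u hu hu'

theorem g2_two_pi : (2 * (Real.pi : ℂ) * Complex.I) ≠ 0 := Complex.two_pi_I_ne_zero

/-- monomials of exponentials -/
theorem g2_prod {n : ℕ} (v : Fin n → ℤ) (z : Fin n → ℂ) :
    ∏ l, expMap n z l ^ v l = Complex.exp (2 * (Real.pi : ℂ) * Complex.I * ∑ l, (v l : ℂ) * z l) := by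
  simp only [expMap, ← Complex.exp_int_mul]
  rw [← Complex.exp_sum, Finset.mul_sum]
  congr 1
  refine Finset.sum_congr rfl fun l _ => ?_
  ring

theorem g2_log {n : ℕ} (x : Fin n → ℂ) (hx : ∀ i, x i ≠ 0) : ∃ z, expMap n z = x := by
  refine ⟨fun i => Complex.log (x i) / (2 * (Real.pi : ℂ) * Complex.I), ?_⟩
  ext i
  simp only [expMap]
  rw [mul_div_cancel₀ _ g2_two_pi, Complex.exp_log (hx i)]

theorem g2_lift {n : ℕ} (v b : Fin n → ℤ) (c : ℂ) (hb : ∑ i, b i * v i = 1) (x : Fin n → ℂ)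
    (hx : ∀ i, x i ≠ 0)
    (h : ∏ l, x l ^ v l = Complex.exp (2 * (Real.pi : ℂ) * Complex.I * c)) :
    ∃ z, expMap n z = x ∧ ∑ l, (v l : ℂ) * z l = c := by
  obtain ⟨z, rfl⟩ := g2_log x hx
  rw [g2_prod, Complex.exp_eq_exp_iff_exists_int] at h
  obtain ⟨k, hk⟩ := h
  have hk' : ∑ l, (v l : ℂ) * z l = c + k := by
    apply mul_left_cancel₀ g2_two_pi
    rw [hk]; ring
  refine ⟨fun l => z l - k * b l, ?_, ?_⟩
  · ext l
    simp only [expMap]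
    rw [Complex.exp_eq_exp_iff_exists_int]
    refine ⟨-(k * b l), ?_⟩
    push_cast; ring
  · simp only [mul_sub, Finset.sum_sub_distrib]
    rw [hk']
    have : ∑ l, (v l : ℂ) * (k * b l) = k * ((∑ l, b l * v l : ℤ) : ℂ) := by
      push_cast
      rw [Finset.mul_sum]
      refine Finset.sum_congr rfl fun l _ => ?_
      ring
    rw [this, hb]
    push_cast; ring

theorem g2_Tsub {n : ℕ} (v b : Fin n → ℤ) (c : ℂ) (hb : ∑ i, b i * v i = 1)
    (g : MvPolynomial (Fin n) ℂ) (hg : Prime g)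
    (h : ∀ z : Fin n → ℂ, ∑ l, (v l : ℂ) * z l = c → eval (expMap n z) g = 0)
    (x : Fin n → ℂ) (hx : ∀ i, x i ≠ 0) (hxg : eval x g = 0) :
    ∃ z, expMap n z = x ∧ ∑ l, (v l : ℂ) * z l = c := by
  let g0 : MvPolynomial (Fin n) ℂ := ∏ l, X l ^ (v l).toNat
    - C (Complex.exp (2 * (Real.pi : ℂ) * Complex.I * c)) * ∏ l, X l ^ (-v l).toNat
  have hg0 : ∀ y : Fin n → ℂ, (∀ i, y i ≠ 0) → (eval y g0 = 0 ↔
      ∏ l, y l ^ v l = Complex.exp (2 * (Real.pi : ℂ) * Complex.I * c)) := by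
    intro y hy
    have h1 : ∏ l, y l ^ v l = (∏ l, y l ^ (v l).toNat) / ∏ l, y l ^ (-v l).toNat := by
      rw [← Finset.prod_div_distrib]
      refine Finset.prod_congr rfl fun l _ => ?_
      rw [← zpow_natCast, ← zpow_natCast, ← zpow_sub₀ (hy l)]
      congr 1
      omega
    rw [h1, div_eq_iff (Finset.prod_ne_zero_iff.2 fun l _ => pow_ne_zero _ (hy l))]
    simp [g0, sub_eq_zero]
  apply g2_lift v b c hb x hx
  rw [← hg0 x hx]
  suffices hdvd : g ∣ g0 by
    obtain ⟨q, hq⟩ := hdvd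
    rw [hq, map_mul, hxg, zero_mul]
  by_contra hnd
  obtain ⟨N, hN⟩ := nss_rad g0 ((∏ l, X l) * g) (by
    intro y hy
    rw [map_mul]
    by_cases hy0 : ∀ i, y i ≠ 0
    · obtain ⟨z, rfl, hz⟩ := g2_lift v b c hb y hy0 ((hg0 y hy0).1 hy)
      rw [h z hz, mul_zero]
    · push Not at hy0
      obtain ⟨i, hi⟩ := hy0
      rw [map_prod, Finset.prod_eq_zero (Finset.mem_univ i) (by simpa using hi), zero_mul])
  rw [mul_pow] at hN
  have hrel : IsRelPrime g0 (g ^ N) :=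
    (IsRelPrime.pow_left (hg.irreducible.isRelPrime_iff_not_dvd.2 hnd)).symm
  have h2 := hrel.dvd_of_dvd_mul_right hN
  -- a point of the subtorus translate
  have h3 : ∑ l, (v l : ℂ) * (c * b l) = c := by
    have : ∑ l, (v l : ℂ) * (c * b l) = c * ((∑ l, b l * v l : ℤ) : ℂ) := by
      push_cast
      rw [Finset.mul_sum]
      refine Finset.sum_congr rfl fun l _ => ?_
      ring
    rw [this, hb]; push_cast; ring
  have hne : ∀ i, expMap n (fun l => c * b l) i ≠ 0 := fun i => Complex.exp_ne_zero _
  have h4 := (hg0 _ hne).2 (by rw [g2_prod, h3])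
  obtain ⟨q, hq⟩ := h2
  have h5 := congrArg (eval (expMap n (fun l => c * b l))) hq
  rw [map_mul, h4, zero_mul, map_pow, map_prod] at h5
  simp only [eval_X] at h5
  exact pow_ne_zero _ (Finset.prod_ne_zero_iff.2 fun l _ => hne l) h5

theorem g2_rat {n : ℕ} (v b : Fin n → ℤ) (c : ℂ) (hb : ∑ i, b i * v i = 1)
    (P Q : Set (MvPolynomial (Fin n) ℂ))
    (hP : ∀ p ∈ P, ∀ m, IsAlgebraic ℚ (coeff m p)) (hQ : ∀ p ∈ Q, ∀ m, IsAlgebraic ℚ (coeff m p))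
    (hS : ∀ z : Fin n → ℂ, ∑ l, (v l : ℂ) * z l = c ↔ ∀ p ∈ P, eval z p = 0)
    (hT : ∀ z : Fin n → ℂ, ∑ l, (v l : ℂ) * z l = c → ∀ p ∈ Q, eval (expMap n z) p = 0)
    (hQ0 : ∃ q ∈ Q, q ≠ 0) : ∃ q : ℚ, c = q := by
  obtain ⟨i0, hi0⟩ : ∃ i0, v i0 ≠ 0 := by
    by_contra! h
    simp [h] at hb
  have hi0' : (v i0 : ℂ) ≠ 0 := by exact_mod_cast hi0
  have hint : ∀ k : ℤ, IsAlgebraic ℚ (k : ℂ) := by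
    intro k
    have := isAlgebraic_algebraMap (R := ℚ) (A := ℂ) (k : ℚ)
    simpa using this
  have hsolve : ∀ y : Fin n → ℂ, ∑ l, (v l : ℂ) * (Function.update y i0
      ((c - ∑ l ∈ Finset.univ.erase i0, (v l : ℂ) * y l) / v i0)) l = c := by
    intro y
    rw [← Finset.add_sum_erase _ _ (Finset.mem_univ i0), Function.update_self]
    have hs : ∀ t : ℂ, ∑ l ∈ Finset.univ.erase i0, (v l : ℂ) * Function.update y i0 t l
        = ∑ l ∈ Finset.univ.erase i0, (v l : ℂ) * y l := fun t =>
      Finset.sum_congr rfl (fun l hl => by rw [Function.update_of_ne (Finset.ne_of_mem_erase hl)])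
    rw [hs, mul_div_cancel₀ _ hi0']
    ring
  have hc : IsAlgebraic ℚ c := by
    by_contra hc
    have hP0 : ∀ p ∈ P, p = 0 := by
      intro p hp
      apply ee_lem p (hP p hp) i0
      intro x hx
      refine ⟨_, ?_, (hS _).1 (hsolve x) p hp⟩
      intro halg
      apply hc
      have h1 : IsAlgebraic ℚ (∑ l ∈ Finset.univ.erase i0, (v l : ℂ) * x l) :=
        Finset.sum_induction _ (IsAlgebraic ℚ) (fun _ _ h1 h2 => h1.add h2) isAlgebraic_zero
          (fun l _ => (hint _).mul (hx l).1)
      have h2 := ((hint (v i0)).mul halg).add h1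
      rw [mul_div_cancel₀ _ hi0', sub_add_cancel] at h2
      exact h2
    have hall : ∀ z : Fin n → ℂ, ∑ l, (v l : ℂ) * z l = c := by
      intro z
      rw [hS]
      intro p hp
      rw [hP0 p hp, map_zero]
    have h1 := hall 0
    have h2 := hall (Pi.single i0 1)
    rw [← h1] at h2
    simp [Pi.single_apply] at h2
    exact hi0 h2
  apply gs_main c hc
  by_contra hζ
  obtain ⟨q, hq, hq0⟩ := hQ0
  apply hq0
  apply ee_lem q (hQ q hq) i0
  intro x hx
  obtain ⟨y, hy⟩ := g2_log x (fun l => (hx l).2)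
  let z := Function.update y i0
      ((c - ∑ l ∈ Finset.univ.erase i0, (v l : ℂ) * y l) / v i0)
  have hz : ∑ l, (v l : ℂ) * z l = c := hsolve y
  refine ⟨expMap n z i0, ?_, ?_⟩
  · intro halg
    apply hζ
    rw [← hz]
    have := g2_prod v z
    rw [← this]
    have hl : ∀ l, IsAlgebraic ℚ (expMap n z l) := by
      intro l
      by_cases h : l = i0
      · rw [h]; exact halg
      · have : expMap n z l = x l := by
          rw [← hy]
          simp [expMap, z, h]
        rw [this]; exact (hx l).1
    have hzp : ∀ l, IsAlgebraic ℚ (expMap n z l ^ v l) := by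
      intro l
      rcases Int.eq_nat_or_neg (v l) with ⟨k, hk | hk⟩
      · rw [hk, zpow_natCast]; exact (hl l).pow _
      · rw [hk, zpow_neg, zpow_natCast]; exact ((hl l).pow _).inv
    exact Finset.prod_induction _ (IsAlgebraic ℚ) (fun _ _ h1 h2 => h1.mul h2) isAlgebraic_one (fun l _ => hzp l)
  · have : Function.update x i0 (expMap n z i0) = expMap n z := by
      ext l
      by_cases h : l = i0
      · rw [h, Function.update_self]
      · rw [Function.update_of_ne h, ← hy]
        simp [expMap, z, h]
    rw [this]
    exact hT z hz q hq

end


theorem g3_poly {n : ℕ} (v : Fin n → ℤ) (i0 : Fin n) (hi0 : v i0 ≠ 0) (q : ℚ) :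
    ∃ p : MvPolynomial (Fin n) ℂ,
        (∀ m, ∃ q : ℚ, coeff m p = (q : ℂ)) ∧
        p.totalDegree = 1 ∧
        ∀ z, eval z p = 0 ↔ ∑ l, (v l : ℂ) * z l = q := by
  let p0 : MvPolynomial (Fin n) ℚ := ∑ l, C (v l : ℚ) * X l - C q
  let p : MvPolynomial (Fin n) ℂ := map (algebraMap ℚ ℂ) p0
  have hev : ∀ z, eval z p = ∑ l, (v l : ℂ) * z l - q := by
    intro z
    simp [p, p0]
  have hi0' : (v i0 : ℂ) ≠ 0 := by exact_mod_cast hi0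
  refine ⟨p, fun m => ⟨coeff m p0, by simp [p, coeff_map]⟩, ?_, fun z => ?_⟩
  · apply le_antisymm
    · refine (show p.totalDegree ≤ p0.totalDegree from
        Finset.sup_mono (support_map_subset _ _)).trans ?_
      refine (totalDegree_sub _ _).trans (max_le ?_ (by simp))
      refine totalDegree_finsetSum_le fun l _ => ?_
      refine (totalDegree_mul _ _).trans ?_
      rw [totalDegree_C, totalDegree_X]
    · rw [Nat.one_le_iff_ne_zero]
      intro h0
      rw [totalDegree_eq_zero_iff_eq_C] at h0
      have h1 := hev 0
      have h2 := hev (Pi.single i0 1)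
      rw [h0, eval_C] at h1 h2
      rw [h1] at h2
      simp [Pi.single_apply] at h2
      exact hi0' (by linear_combination -h2)
  · rw [hev, sub_eq_zero]

theorem g3_torsion {n : ℕ} (v : Fin n → ℤ) (i0 : Fin n) (hi0 : v i0 ≠ 0) (q : ℚ)
    (T : Set (Fin n → ℂ))
    (hT : ∀ x, x ∈ T ↔ ∃ z, expMap n z = x ∧ ∑ l, (v l : ℂ) * z l = q) :
    IsTorsionTranslateOfSubtorus n T := by
  have hi0' : (v i0 : ℂ) ≠ 0 := by exact_mod_cast hi0
  let e : Fin n → ℂ := Pi.single i0 ((q : ℂ) / v i0)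
  have he : ∑ l, (v l : ℂ) * e l = q := by
    simp only [e, Pi.single_apply, mul_ite, mul_zero, Finset.sum_ite_eq', Finset.mem_univ, if_true]
    rw [mul_div_cancel₀ _ hi0']
  let a : Fin n → Fin n → ℤ := fun l j =>
    (if l = j then v i0 else 0) - (if l = i0 then v j else 0)
  have ha : ∀ (l : Fin n) (y : Fin n → ℂ), ∑ j, (a l j : ℂ) * y j =
      v i0 * y l - (if l = i0 then ∑ j, (v j : ℂ) * y j else 0) := by
    intro l y
    simp only [a]
    push_cast
    simp only [sub_mul, Finset.sum_sub_distrib, ite_mul, zero_mul, Finset.sum_ite_eq,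
      Finset.mem_univ, if_true]
    congr 1
    split_ifs <;> simp
  have hadd : ∀ (y w : Fin n → ℂ) l, expMap n y l * expMap n w l = expMap n (fun l => y l + w l) l := by
    intro y w l
    simp only [expMap, ← Complex.exp_add, mul_add]
  refine ⟨expMap n e, _, ?_, ⟨n, a, rfl⟩, ?_⟩
  · intro i
    by_cases hi : i = i0
    · subst hi
      let r : ℚ := q / v i
      have hr : e i = (r : ℂ) := by simp [e, r]
      refine ⟨r.den, r.den_pos, ?_⟩
      simp only [expMap, hr]
      rw [← Complex.exp_nat_mul, Complex.exp_eq_one_iff]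
      refine ⟨r.num, ?_⟩
      have h1 : (r.den : ℂ) * (r : ℂ) = r.num := by
        exact_mod_cast congrArg (Rat.cast : ℚ → ℂ) (Rat.den_mul_eq_num r)
      rw [← h1]; ring
    · exact ⟨1, one_pos, by simp [expMap, e, hi]⟩
  · ext x
    rw [hT]
    constructor
    · rintro ⟨z, rfl, hz⟩
      refine ⟨expMap n (fun l => z l - e l), ⟨expMap n (fun l => (z l - e l) / v i0),
        fun j => Complex.exp_ne_zero _, ?_⟩, ?_⟩
      · intro l
        rw [g2_prod, ha]
        have h0 : ∑ j, (v j : ℂ) * ((z j - e j) / v i0) = 0 := by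
          have : ∑ j, (v j : ℂ) * ((z j - e j) / v i0) =
              (∑ j, (v j : ℂ) * z j - ∑ j, (v j : ℂ) * e j) / v i0 := by
            rw [← Finset.sum_sub_distrib, Finset.sum_div]
            refine Finset.sum_congr rfl fun j _ => ?_
            ring
          rw [this, hz, he, sub_self, zero_div]
        rw [h0, ite_self, sub_zero, mul_div_cancel₀ _ hi0']
        rfl
      · ext l
        simp only [hadd]
        simp [expMap]
    · rintro ⟨w, ⟨s, hs, hw⟩, rfl⟩
      obtain ⟨y, rfl⟩ := g2_log s hs
      refine ⟨fun l => e l + ∑ j, (a l j : ℂ) * y j, ?_, ?_⟩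
      · ext l
        rw [← hadd e (fun l => ∑ j, (a l j : ℂ) * y j)]
        show _ = expMap n e l * w l
        rw [hw, g2_prod]
        rfl
      · simp only [mul_add, Finset.sum_add_distrib, he, ha, mul_sub, Finset.sum_sub_distrib]
        simp only [mul_ite, mul_zero, Finset.sum_ite_eq', Finset.mem_univ, if_true]
        rw [Finset.mul_sum]
        have : ∑ x, (v x : ℂ) * ((v i0 : ℂ) * y x) = ∑ i, (v i0 : ℂ) * ((v i : ℂ) * y i) :=
          Finset.sum_congr rfl fun j _ => by ring
        rw [this]; ring

theorem codim_one_case (n : ℕ) (hn : 2 ≤ n)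
    (S T : Set (Fin n → ℂ))
    (hSclosed : ZClosedQbar n S) (hSirr : IsIrrOf (ZClosed n) S)
    (hSdim : dimOf (ZClosed n) S = ((n - 1 : ℕ) : ℕ∞))
    (hTclosed : ZClosedTorusQbar n T) (hTirr : IsIrrOf (ZClosedTorus n) T)
    (hTdim : dimOf (ZClosedTorus n) T = ((n - 1 : ℕ) : ℕ∞))
    (hsub : expMap n '' S ⊆ T) :
    (∃ p : MvPolynomial (Fin n) ℂ,
        (∀ m, ∃ q : ℚ, coeff m p = (q : ℂ)) ∧
        p.totalDegree = 1 ∧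
        S = {z | eval z p = 0}) ∧
    IsTorsionTranslateOfSubtorus n T := by
  obtain ⟨f, hf, hfS⟩ := g2_S hn S hSclosed hSirr hSdim
  obtain ⟨g, hg, hgT⟩ := g2_T hn T hTclosed hTirr hTdim
  have hTne := g2_Tne hn T hTdim
  obtain ⟨v, b, c, hb, hv⟩ := g2_hyper f g hf hg
    (fun z hz => hgT _ (hsub ⟨z, (hfS z).2 hz, rfl⟩))
  have hSv : ∀ z, z ∈ S ↔ ∑ l, (v l : ℂ) * z l = c := fun z => (hfS z).trans (hv z)
  obtain ⟨P, hP, hSP⟩ := hSclosed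
  obtain ⟨Q, hQ, hTQ⟩ := hTclosed
  obtain ⟨q, rfl⟩ : ∃ q : ℚ, c = q := by
    refine g2_rat v b c hb P Q hP hQ ?_ ?_ ?_
    · intro z
      rw [← hSv, hSP]; rfl
    · intro z hz
      have := hsub ⟨z, (hSv z).2 hz, rfl⟩
      rw [hTQ] at this
      exact this.2
    · by_contra! h0
      apply hTne
      rw [hTQ]
      ext x
      refine ⟨fun h => h.1, fun h => ⟨h, fun p hp => ?_⟩⟩
      rw [h0 p hp, map_zero]
  obtain ⟨i0, hi0⟩ : ∃ i0, v i0 ≠ 0 := by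
    by_contra! h
    simp [h] at hb
  constructor
  · obtain ⟨p, h1, h2, h3⟩ := g3_poly v i0 hi0 q
    refine ⟨p, h1, h2, ?_⟩
    ext z
    rw [hSv]
    exact (h3 z).symm
  · apply g3_torsion v i0 hi0 q T
    intro x
    constructor
    · intro hx
      refine g2_Tsub v b q hb g hg (fun z hz => hgT _ (hsub ⟨z, (hSv z).2 hz, rfl⟩)) x ?_ (hgT x hx)
      rw [hTQ] at hx
      exact hx.1
    · rintro ⟨z, rfl, hz⟩
      exact hsub ⟨z, (hSv z).2 hz, rfl⟩
end
end

section
/- Let Z ⊆ ℂ^n be a Zariski constructible subset (a finite union of differences of Zariski closed subsets of ℂ^n). Then the closure of Z in the Euclidean (standard metric) topology of ℂ^n equals the Zariski closure of Z, i.e., it equals the common zero locus of all polynomials in n complex variables that vanish identically on Z. -/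
open MvPolynomial

noncomputable section

/-- Zariski constructible: a finite union of differences of Zariski closed sets. -/
def ZConstructible (n : ℕ) (Z : Set (Fin n → ℂ)) : Prop :=
  ∃ (k : ℕ) (F G : Fin k → Set (Fin n → ℂ)),
    (∀ i, ZClosed n (F i) ∧ ZClosed n (G i)) ∧ Z = ⋃ i, F i \ G i

/-- A monic complex polynomial of positive degree has a root controlled by the constant term. -/
lemma exists_small_root (q : Polynomial ℂ) (hq : q.Monic) (hd : 0 < q.natDegree) :
    ∃ t, q.IsRoot t ∧ ‖t‖ ^ q.natDegree ≤ ‖q.coeff 0‖ := by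
  by_contra! hcon
  have hs : q.Splits := IsAlgClosed.splits q
  have h0 := hs.coeff_zero_eq_prod_roots_of_monic hq
  have hcard : q.roots.card = q.natDegree := hs.natDegree_eq_card_roots.symm
  have h1 : ‖q.coeff 0‖ = (q.roots.map (fun t => ‖t‖)).prod := by
    rw [h0, norm_mul, norm_pow, norm_neg, norm_one, one_pow, one_mul]
    exact map_multiset_prod (normHom : ℂ →*₀ ℝ) _
  have hroot : ∀ t ∈ q.roots, ‖q.coeff 0‖ < ‖t‖ ^ q.natDegree := fun t ht =>
    hcon t (Polynomial.isRoot_of_mem_roots ht)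
  have hne : q.roots ≠ 0 := by
    intro h; rw [h] at hcard; simp at hcard; omega
  obtain ⟨a, ha⟩ := Multiset.exists_mem_of_ne_zero hne
  -- choose the root of least norm
  obtain ⟨b, hb, hmin⟩ := Finset.exists_min_image q.roots.toFinset (fun t => ‖t‖)
    ⟨a, by simpa using ha⟩
  have hb' : b ∈ q.roots := Multiset.mem_toFinset.1 hb
  have : ‖b‖ ^ q.natDegree ≤ (q.roots.map (fun t => ‖t‖)).prod := by
    have h2 : ((q.roots.map (fun _ => ‖b‖)).prod) ≤ (q.roots.map (fun t => ‖t‖)).prod := by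
      apply Multiset.prod_map_le_prod_map₀
      · intro i _; exact norm_nonneg _
      · intro i hi; exact hmin i (Multiset.mem_toFinset.2 hi)
    simpa [hcard] using h2
  have := hroot b hb'
  linarith

/-- A crude bound for roots of monic polynomials. -/
lemma root_bound (q : Polynomial ℂ) (hq : q.Monic) (t : ℂ) (ht : q.IsRoot t) :
    ‖t‖ ≤ (∑ i ∈ Finset.range q.natDegree, ‖q.coeff i‖) + 1 := by
  have h := ht.norm_lt_cauchyBound hq.ne_zero
  refine (show ‖t‖ ≤ (q.cauchyBound : ℝ) from h.le).trans ?_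
  rw [Polynomial.cauchyBound, hq.leadingCoeff]
  simp only [nnnorm_one, div_one, NNReal.coe_add, NNReal.coe_one]
  gcongr
  have : (Finset.range q.natDegree).sup (fun x => ‖q.coeff x‖₊) ≤
      ∑ i ∈ Finset.range q.natDegree, ‖q.coeff i‖₊ := by
    apply Finset.sup_le
    intro i hi
    exact Finset.single_le_sum (f := fun i => ‖q.coeff i‖₊) (fun _ _ => zero_le) hi
  have h2 := NNReal.coe_le_coe.2 this
  rw [NNReal.coe_sum] at h2
  exact h2

/-- Nonvanishing loci of nonzero polynomials are dense in affine space. -/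
lemma dense_ne_zero {d : ℕ} (b : MvPolynomial (Fin d) ℂ) (hb : b ≠ 0) :
    Dense {y : Fin d → ℂ | eval y b ≠ 0} := by
  rw [Metric.dense_iff]
  intro y r hr
  by_contra hcon
  apply hb
  refine MvPolynomial.funext_set (fun i => Metric.ball (y i) r) (fun i => ?_) ?_
  · exact infinite_of_mem_nhds (y i) (Metric.ball_mem_nhds _ hr)
  · intro x hx
    by_contra hx0
    apply hcon
    refine ⟨x, ?_, ?_⟩
    · rw [ball_pi _ hr]; exact hx
    · simpa using hx0

/-- Lying over for points. -/
lemma exists_point {d : ℕ} {B : Type*} [CommRing B] [IsDomain B] [Algebra ℂ B]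
    [Algebra.FiniteType ℂ B] [Algebra (MvPolynomial (Fin d) ℂ) B]
    [IsScalarTower ℂ (MvPolynomial (Fin d) ℂ) B]
    [Algebra.IsIntegral (MvPolynomial (Fin d) ℂ) B]
    [Module.IsTorsionFree (MvPolynomial (Fin d) ℂ) B]
    (h : B) (y : Fin d → ℂ) (t : ℂ)
    (ht : ((minpoly (MvPolynomial (Fin d) ℂ) h).map (eval y)).IsRoot t) :
    ∃ φ : B →ₐ[ℂ] ℂ, (∀ a : MvPolynomial (Fin d) ℂ, φ (algebraMap _ B a) = eval y a) ∧
      φ h = t := by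
  let A := MvPolynomial (Fin d) ℂ
  let F : Polynomial A →+* B := (Polynomial.aeval (R := A) h).toRingHom
  let e : Polynomial A →+* ℂ := Polynomial.eval₂RingHom (eval y) t
  have hFC : ∀ a : A, F (Polynomial.C a) = algebraMap A B a := fun a => by simp [F]
  have hFX : F Polynomial.X = h := by simp [F]
  have heC : ∀ a : A, e (Polynomial.C a) = eval y a := fun a => by simp [e]
  have heX : e Polynomial.X = t := by simp [e]
  let : Algebra (Polynomial A) B := F.toAlgebra
  have : IsScalarTower A (Polynomial A) B := IsScalarTower.of_algebraMap_eq fun a => (hFC a).symm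
  have : Algebra.IsIntegral (Polynomial A) B := Algebra.IsIntegral.tower_top A
  have hsurj : Function.Surjective e := fun c => ⟨Polynomial.C (C c), by rw [heC]; simp⟩
  have hmax : (RingHom.ker e).IsMaximal := RingHom.ker_isMaximal_of_surjective e hsurj
  obtain ⟨Q, hQ, hQc⟩ := Ideal.exists_ideal_over_prime_of_isIntegral_of_isDomain
    (R := Polynomial A) (S := B) (RingHom.ker e) (by
      intro p hp
      have hp' : Polynomial.aeval h p = 0 := hp
      obtain ⟨r, rfl⟩ := minpoly.isIntegrallyClosed_dvd (Algebra.IsIntegral.isIntegral (R := A) h) hp'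
      rw [RingHom.mem_ker, map_mul]
      have : e (minpoly A h) = 0 := by
        have := ht
        rw [Polynomial.IsRoot, Polynomial.eval_map] at this
        exact this
      rw [this, zero_mul])
  have : Q.IsMaximal := Ideal.isMaximal_of_isIntegral_of_isMaximal_comap (R := Polynomial A) Q
    (by rw [hQc]; exact hmax)
  let : Field (B ⧸ Q) := Ideal.Quotient.field Q
  have : Module.Finite ℂ (B ⧸ Q) := finite_of_finite_type_of_isJacobsonRing ℂ (B ⧸ Q)
  have hbij := IsAlgClosed.algebraMap_bijective_of_isIntegral (k := ℂ) (K := B ⧸ Q)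
  let E : ℂ ≃ₐ[ℂ] (B ⧸ Q) := AlgEquiv.ofBijective (Algebra.ofId ℂ (B ⧸ Q)) hbij
  let φ : B →ₐ[ℂ] ℂ := E.symm.toAlgHom.comp (Ideal.Quotient.mkₐ ℂ Q)
  have hφ0 : ∀ b ∈ Q, φ b = 0 := fun b hb => by
    have : Ideal.Quotient.mkₐ ℂ Q b = 0 := Ideal.Quotient.eq_zero_iff_mem.2 hb
    simp only [φ, AlgHom.comp_apply, this, map_zero]
  have key : ∀ p : Polynomial A, φ (F p) = e p := by
    intro p
    have : p - Polynomial.C (C (e p)) ∈ Q.comap (algebraMap (Polynomial A) B) := by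
      rw [hQc, RingHom.mem_ker, map_sub, heC]; simp
    have h2 := hφ0 _ this
    have h3 : φ (F (p - Polynomial.C (C (e p)))) = 0 := h2
    rw [map_sub, map_sub, hFC, sub_eq_zero] at h3
    rw [h3, ← MvPolynomial.algebraMap_eq, ← IsScalarTower.algebraMap_apply ℂ A B]
    simp
  refine ⟨φ, fun a => ?_, ?_⟩
  · have := key (Polynomial.C a); rwa [hFC, heC] at this
  · have := key Polynomial.X; rwa [hFX, heX] at this

/-- A polynomial vanishing at `z` but not at the other points of a finite set. -/
lemma exists_separating {n : ℕ} (z : Fin n → ℂ) (T : Set (Fin n → ℂ)) (hT : T.Finite) :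
    ∃ p : MvPolynomial (Fin n) ℂ, eval z p = 0 ∧ ∀ w ∈ T, w ≠ z → eval w p ≠ 0 := by
  classical
  have hq : ∀ w : Fin n → ℂ, ∃ q : MvPolynomial (Fin n) ℂ,
      eval z q = 1 ∧ (w ≠ z → eval w q = 0) := by
    intro w
    by_cases hw : w = z
    · exact ⟨1, by simp, fun h => absurd hw h⟩
    · obtain ⟨i, hi⟩ := Function.ne_iff.1 hw
      have hi' : z i - w i ≠ 0 := sub_ne_zero.2 (Ne.symm hi)
      refine ⟨C (z i - w i)⁻¹ * (X i - C (w i)), ?_, ?_⟩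
      · simp [hi']
      · simp
  choose q hq1 hq2 using hq
  refine ⟨1 - ∏ w ∈ hT.toFinset, q w, ?_, ?_⟩
  · simp [map_prod, hq1]
  · intro w hw hwz
    have : ∏ v ∈ hT.toFinset, eval w (q v) = 0 :=
      Finset.prod_eq_zero (hT.mem_toFinset.2 hw) (hq2 w hwz)
    simp [map_prod, this]

/-- The image of a root relation under a point. -/
lemma isRoot_point {d : ℕ} {B : Type*} [CommRing B] [Algebra ℂ B]
    [Algebra (MvPolynomial (Fin d) ℂ) B]
    (y : Fin d → ℂ) (φ : B →ₐ[ℂ] ℂ)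
    (hφ : ∀ a : MvPolynomial (Fin d) ℂ, φ (algebraMap _ B a) = eval y a) (h : B) :
    ((minpoly (MvPolynomial (Fin d) ℂ) h).map (eval y)).IsRoot (φ h) := by
  have h1 := congrArg φ (minpoly.aeval (MvPolynomial (Fin d) ℂ) h)
  rw [map_zero, Polynomial.aeval_def] at h1
  have h2 := Polynomial.hom_eval₂ (minpoly (MvPolynomial (Fin d) ℂ) h)
    (algebraMap (MvPolynomial (Fin d) ℂ) B) φ.toRingHom h
  have h3 : φ.toRingHom.comp (algebraMap (MvPolynomial (Fin d) ℂ) B) = eval y :=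
    RingHom.ext hφ
  rw [h3] at h2
  rw [Polynomial.IsRoot, Polynomial.eval_map]
  exact h2.symm.trans h1

/-- Limits of roots are roots of the limit. -/
lemma root_limit {d : ℕ} (Q : Polynomial (MvPolynomial (Fin d) ℂ)) (hQ : Q.Monic)
    (y : ℕ → Fin d → ℂ) (y₀ : Fin d → ℂ) (hy : Filter.Tendsto y Filter.atTop (nhds y₀))
    (u : ℕ → ℂ) (u₀ : ℂ) (hu : Filter.Tendsto u Filter.atTop (nhds u₀))
    (hroot : ∀ k, (Q.map (eval (y k))).IsRoot (u k)) : (Q.map (eval y₀)).IsRoot u₀ := by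
  have hev : ∀ (x : Fin d → ℂ) (u : ℂ), (Q.map (eval x)).eval u =
      ∑ j ∈ Finset.range (Q.natDegree + 1), eval x (Q.coeff j) * u ^ j := by
    intro x u
    rw [Polynomial.eval_eq_sum_range, hQ.natDegree_map]
    simp only [Polynomial.coeff_map]
  have h1 : Filter.Tendsto
      (fun k => ∑ j ∈ Finset.range (Q.natDegree + 1), eval (y k) (Q.coeff j) * u k ^ j)
      Filter.atTop
      (nhds (∑ j ∈ Finset.range (Q.natDegree + 1), eval y₀ (Q.coeff j) * u₀ ^ j)) := by
    refine tendsto_finsetSum _ fun j _ => Filter.Tendsto.mul ?_ (hu.pow j)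
    exact ((MvPolynomial.continuous_eval (Q.coeff j)).tendsto y₀).comp hy
  have h2 : (fun k => ∑ j ∈ Finset.range (Q.natDegree + 1), eval (y k) (Q.coeff j) * u k ^ j) =
      fun _ => 0 := by
    funext k
    rw [← hev]
    exact hroot k
  rw [h2] at h1
  rw [Polynomial.IsRoot, hev]
  exact tendsto_nhds_unique h1 tendsto_const_nhds

set_option maxHeartbeats 1600000 in
/-- Density of principal open subsets, in terms of a Noether normalization. -/
lemma irreducible_dense_aux {n d : ℕ} {B : Type*} [CommRing B] [IsDomain B] [Algebra ℂ B]
    [Algebra.FiniteType ℂ B] [Algebra (MvPolynomial (Fin d) ℂ) B]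
    [IsScalarTower ℂ (MvPolynomial (Fin d) ℂ) B]
    [Algebra.IsIntegral (MvPolynomial (Fin d) ℂ) B]
    [Module.IsTorsionFree (MvPolynomial (Fin d) ℂ) B]
    (mk : MvPolynomial (Fin n) ℂ →ₐ[ℂ] B) (P : Ideal (MvPolynomial (Fin n) ℂ))
    (hmk : ∀ p ∈ P, mk p = 0)
    (f : MvPolynomial (Fin n) ℂ) (hf0 : mk f ≠ 0) (z : Fin n → ℂ) (φ₀ : B →ₐ[ℂ] ℂ)
    (hφ₀ : ∀ p, φ₀ (mk p) = eval z p) :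
    z ∈ closure {w : Fin n → ℂ | (∀ p ∈ P, eval w p = 0) ∧ eval w f ≠ 0} := by
  let A := MvPolynomial (Fin d) ℂ
  have hint : ∀ b : B, IsIntegral A b := fun b => Algebra.IsIntegral.isIntegral b
  have pt : ∀ (φ : B →ₐ[ℂ] ℂ) (p : MvPolynomial (Fin n) ℂ),
      φ (mk p) = eval (fun i => φ (mk (X i))) p := by
    intro φ p
    have : φ.comp mk = aeval (fun i => φ (mk (X i))) := by
      ext i; simp
    have := congrArg (fun ψ => ψ p) this
    simpa [MvPolynomial.aeval_eq_eval] using this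
  let y₀ : Fin d → ℂ := fun i => φ₀ (algebraMap A B (X i))
  have hy₀ : ∀ a : A, φ₀ (algebraMap A B a) = eval y₀ a := by
    intro a
    have : φ₀.comp (IsScalarTower.toAlgHom ℂ A B) = aeval y₀ := by
      apply MvPolynomial.algHom_ext
      intro i
      rw [MvPolynomial.aeval_X]
      rfl
    have h2 : φ₀ (algebraMap A B a) = aeval y₀ a := congrArg (fun ψ => ψ a) this
    rw [h2, MvPolynomial.aeval_eq_eval]
  -- minimal polynomials of coordinates
  let M : Fin n → Polynomial A := fun i => minpoly A (mk (X i))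
  have hM : ∀ i, (M i).Monic := fun i => minpoly.monic (hint _)
  -- the fibre is finite
  let T : Set (Fin n → ℂ) := Set.pi Set.univ fun i => {t | ((M i).map (eval y₀)).IsRoot t}
  have hT : T.Finite := Set.Finite.pi fun i =>
    Polynomial.finite_setOfPred_isRoot ((hM i).map _).ne_zero
  obtain ⟨s, hs0, hsT⟩ := exists_separating z T hT
  let h : B := mk s
  let m := minpoly A h
  have hm : m.Monic := minpoly.monic (hint _)
  have hmd : 0 < m.natDegree := minpoly.natDegree_pos (hint _)
  have hmd' : ∀ y : Fin d → ℂ, (m.map (eval y)).natDegree = m.natDegree := fun y =>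
    hm.natDegree_map _
  have hm0 : eval y₀ (m.coeff 0) = 0 := by
    have := isRoot_point y₀ φ₀ hy₀ h
    rw [show φ₀ h = 0 from (hφ₀ s).trans hs0, Polynomial.IsRoot,
      ← Polynomial.coeff_zero_eq_eval_zero, Polynomial.coeff_map] at this
    exact this
  -- a nonzero multiple of f in A
  obtain ⟨b, hb0, c, hbc⟩ := (hint (mk f)).isAlgebraic.exists_nonzero_dvd
    (mem_nonZeroDivisors_of_ne_zero hf0)
  -- base points
  have hdense := dense_ne_zero b hb0 y₀
  obtain ⟨y, hyb, hylim⟩ := mem_closure_iff_seq_limit.1 hdense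
  have hroot : ∀ k, ∃ t, (m.map (eval (y k))).IsRoot t ∧
      ‖t‖ ^ m.natDegree ≤ ‖eval (y k) (m.coeff 0)‖ := by
    intro k
    obtain ⟨t, ht1, ht2⟩ := exists_small_root (m.map (eval (y k))) (hm.map _)
      (by rw [hmd']; exact hmd)
    rw [hmd', Polynomial.coeff_map] at ht2
    exact ⟨t, ht1, ht2⟩
  choose t ht1 ht2 using hroot
  have hφ : ∀ k, ∃ φ : B →ₐ[ℂ] ℂ, (∀ a : A, φ (algebraMap _ B a) = eval (y k) a) ∧ φ h = t k :=
    fun k => exists_point h (y k) (t k) (ht1 k)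
  choose φ hφ1 hφ2 using hφ
  let w : ℕ → Fin n → ℂ := fun k i => φ k (mk (X i))
  have hwP : ∀ k, ∀ p ∈ P, eval (w k) p = 0 := fun k p hp => by
    rw [← pt (φ k) p, hmk p hp, map_zero]
  have hwf : ∀ k, eval (w k) f ≠ 0 := fun k h0 => by
    apply hyb k
    rw [← hφ1 k b, hbc, map_mul, pt (φ k) f]
    exact mul_eq_zero_of_left h0 _
  have hcont : ∀ {j : ℕ} (p : MvPolynomial (Fin j) ℂ), Continuous fun x : Fin j → ℂ => eval x p :=
    fun p => MvPolynomial.continuous_eval p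
  -- t tends to zero
  have htlim : Filter.Tendsto t Filter.atTop (nhds 0) := by
    have h1 : Filter.Tendsto (fun k => ‖eval (y k) (m.coeff 0)‖) Filter.atTop (nhds 0) := by
      have := (((hcont (m.coeff 0)).tendsto y₀).comp hylim).norm
      rw [hm0, norm_zero] at this
      exact this
    have h2 : Filter.Tendsto (fun k => ‖t k‖ ^ m.natDegree) Filter.atTop (nhds 0) :=
      squeeze_zero (fun k => by positivity) ht2 h1
    rw [tendsto_zero_iff_norm_tendsto_zero]
    rw [Metric.tendsto_atTop] at h2 ⊢
    intro ε hε
    obtain ⟨N, hN⟩ := h2 (ε ^ m.natDegree) (by positivity)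
    refine ⟨N, fun k hk => ?_⟩
    have := hN k hk
    rw [Real.dist_eq, sub_zero, abs_of_nonneg (by positivity)] at this ⊢
    exact lt_of_pow_lt_pow_left₀ _ hε.le this
  -- boundedness of w
  have hwroot : ∀ k i, ((M i).map (eval (y k))).IsRoot (w k i) := fun k i =>
    isRoot_point (y k) (φ k) (hφ1 k) (mk (X i))
  have hbd : ∀ i, ∃ R : ℝ, ∀ k, ‖w k i‖ ≤ R := by
    intro i
    have hc : Continuous fun x : Fin d → ℂ =>
        (∑ j ∈ Finset.range (M i).natDegree, ‖eval x ((M i).coeff j)‖) + 1 :=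
      (continuous_finsetSum _ fun j _ => (hcont _).norm).add continuous_const
    obtain ⟨R, hR⟩ := ((hc.tendsto y₀).comp hylim).bddAbove_range
    refine ⟨R, fun k => ?_⟩
    have h1 := root_bound _ ((hM i).map (eval (y k))) _ (hwroot k i)
    rw [(hM i).natDegree_map] at h1
    simp only [Polynomial.coeff_map] at h1
    exact h1.trans (hR ⟨k, rfl⟩)
  choose R hR using hbd
  have hcomp : IsCompact (Set.pi Set.univ fun i => Metric.closedBall (0 : ℂ) (R i)) :=
    isCompact_univ_pi fun i => isCompact_closedBall _ _
  obtain ⟨w', -, σ, hσ, hlim⟩ := hcomp.tendsto_subseq (x := w)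
    (fun k i _ => by simpa using hR i k)
  have hylim' := hylim.comp hσ.tendsto_atTop
  -- identify the limit
  have hw's : eval w' s = 0 := by
    have h1 : Filter.Tendsto (fun k => eval (w (σ k)) s) Filter.atTop (nhds (eval w' s)) :=
      ((hcont s).tendsto w').comp hlim
    have h2 : (fun k => eval (w (σ k)) s) = t ∘ σ := by
      funext k
      rw [Function.comp, ← hφ2, ← pt (φ (σ k)) s]
    rw [h2] at h1
    exact tendsto_nhds_unique h1 (htlim.comp hσ.tendsto_atTop)
  have hw'T : w' ∈ T := by
    intro i _
    exact root_limit (M i) (hM i) (fun k => y (σ k)) y₀ hylim' (fun k => w (σ k) i) (w' i)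
      ((tendsto_pi_nhds.1 hlim) i) (fun k => hwroot (σ k) i)
  have hw'z : w' = z := by
    by_contra hne
    exact hsT w' hw'T hne hw's
  rw [hw'z] at hlim
  exact mem_closure_of_tendsto hlim (Filter.Eventually.of_forall fun k =>
    ⟨hwP (σ k), hwf (σ k)⟩)

/-- Density of principal open subsets, in terms of a finitely generated domain. -/
lemma irreducible_dense_aux' {n : ℕ} {B : Type*} [CommRing B] [IsDomain B] [Algebra ℂ B]
    [Algebra.FiniteType ℂ B]
    (mk : MvPolynomial (Fin n) ℂ →ₐ[ℂ] B) (P : Ideal (MvPolynomial (Fin n) ℂ))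
    (hmk : ∀ p ∈ P, mk p = 0)
    (f : MvPolynomial (Fin n) ℂ) (hf0 : mk f ≠ 0) (z : Fin n → ℂ) (φ₀ : B →ₐ[ℂ] ℂ)
    (hφ₀ : ∀ p, φ₀ (mk p) = eval z p) :
    z ∈ closure {w : Fin n → ℂ | (∀ p ∈ P, eval w p = 0) ∧ eval w f ≠ 0} := by
  obtain ⟨d, g, ginj, gint⟩ := exists_integral_inj_algHom_of_fg ℂ B
  let _ : Algebra (MvPolynomial (Fin d) ℂ) B := g.toRingHom.toAlgebra
  have : IsScalarTower ℂ (MvPolynomial (Fin d) ℂ) B :=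
    IsScalarTower.of_algebraMap_eq fun c => (g.commutes c).symm
  have : Algebra.IsIntegral (MvPolynomial (Fin d) ℂ) B := ⟨gint⟩
  have : FaithfulSMul (MvPolynomial (Fin d) ℂ) B :=
    (faithfulSMul_iff_algebraMap_injective _ B).2 ginj
  exact irreducible_dense_aux (d := d) mk P hmk f hf0 z φ₀ hφ₀

/-- Density of principal open subsets of irreducible varieties, Euclidean topology. -/
lemma irreducible_dense {n : ℕ} (P : Ideal (MvPolynomial (Fin n) ℂ)) [P.IsPrime]
    (f : MvPolynomial (Fin n) ℂ) (hf : f ∉ P) (z : Fin n → ℂ) (hz : ∀ p ∈ P, eval z p = 0) :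
    z ∈ closure {w : Fin n → ℂ | (∀ p ∈ P, eval w p = 0) ∧ eval w f ≠ 0} := by
  let φ₀ : (MvPolynomial (Fin n) ℂ ⧸ P) →ₐ[ℂ] ℂ := Ideal.Quotient.liftₐ P (aeval z) (fun p hp => by
    simpa [MvPolynomial.aeval_eq_eval] using hz p hp)
  have hφ₀ : ∀ p, φ₀ (Ideal.Quotient.mkₐ ℂ P p) = eval z p := fun p => by
    have : φ₀ (Ideal.Quotient.mkₐ ℂ P p) = aeval z p := Ideal.Quotient.liftₐ_apply _ _ _ _
    rw [this, MvPolynomial.aeval_eq_eval]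
  have hmk : ∀ p ∈ P, Ideal.Quotient.mkₐ ℂ P p = 0 := fun p hp =>
    Ideal.Quotient.eq_zero_iff_mem.2 hp
  have hf0 : Ideal.Quotient.mkₐ ℂ P f ≠ 0 := fun h => hf (Ideal.Quotient.eq_zero_iff_mem.1 h)
  exact irreducible_dense_aux' (Ideal.Quotient.mkₐ ℂ P) P hmk f hf0 z φ₀ hφ₀

/-- Ideal of polynomials vanishing on a set. -/
def vanIdeal {n : ℕ} (Z : Set (Fin n → ℂ)) : Ideal (MvPolynomial (Fin n) ℂ) where
  carrier := {p | ∀ w ∈ Z, eval w p = 0}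
  zero_mem' := by intro w _; simp
  add_mem' := by
    intro p q hp hq w hw
    rw [map_add, hp w hw, hq w hw, add_zero]
  smul_mem' := by
    intro c p hp w hw
    rw [smul_eq_mul, map_mul, hp w hw, mul_zero]

/-- The case of a difference of two closed sets. -/
lemma diff_case {n : ℕ} (F G : Set (Fin n → ℂ)) (hF : ZClosed n F) (hG : ZClosed n G)
    (z : Fin n → ℂ) (hz : ∀ p ∈ vanIdeal (F \ G), eval z p = 0) : z ∈ closure (F \ G) := by
  obtain ⟨PF, hPF⟩ := hF
  obtain ⟨PG, hPG⟩ := hG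
  have : (RingHom.ker (eval z)).IsPrime := RingHom.ker_isPrime _
  obtain ⟨P, hP, hPz⟩ := Ideal.exists_minimalPrimes_le
    (I := vanIdeal (F \ G)) (J := RingHom.ker (eval z)) (fun p hp => hz p hp)
  have hPp : P.IsPrime := hP.1.1
  have hIP : vanIdeal (F \ G) ≤ P := hP.1.2
  obtain ⟨x, hx⟩ := Submodule.exists_eq_colon_of_mem_minimalPrimes
    (N := vanIdeal (F \ G)) (x := (1 : MvPolynomial (Fin n) ℂ)) (I := P) (by
      convert hP
      ext r
      simp [Submodule.mem_colon_singleton])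
  have hmem : ∀ r, r ∈ P ↔ r * x ∈ vanIdeal (F \ G) := by
    intro r
    conv_lhs => rw [hx]
    rw [Submodule.mem_colon_singleton, smul_eq_mul]
  have hex : ∃ g ∈ PG, g ∉ P := by
    by_contra! hcon
    apply hPp.ne_top
    rw [Ideal.eq_top_iff_one, hmem, one_mul]
    intro w hw
    have hwG := hw.2
    rw [hPG] at hwG
    simp only [Set.mem_ofPred_eq, not_forall] at hwG
    obtain ⟨g, hg, hgw⟩ := hwG
    have := (hmem g).1 (hcon g hg) w hw
    rw [map_mul] at this
    exact (mul_eq_zero.1 this).resolve_left hgw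
  obtain ⟨g, hg, hgP⟩ := hex
  refine closure_mono ?_ (irreducible_dense P g hgP z fun p hp => hPz hp)
  rintro w ⟨hw1, hw2⟩
  constructor
  · rw [hPF]
    intro p hp
    refine hw1 p (hIP ?_)
    intro v hv
    have := hv.1
    rw [hPF] at this
    exact this p hp
  · intro hwG
    rw [hPG] at hwG
    exact hw2 (hwG g hg)

/-- For a Zariski constructible set `Z ⊆ ℂ^n`, the closure of `Z` in the
Euclidean topology equals the Zariski closure of `Z`, i.e. the common zero locus
of all polynomials vanishing identically on `Z`. -/
theorem euclidean_closure_eq_zariski_closure (n : ℕ)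
    (Z : Set (Fin n → ℂ)) (hZ : ZConstructible n Z) :
    closure Z =
      {z | ∀ p : MvPolynomial (Fin n) ℂ, (∀ w ∈ Z, eval w p = 0) → eval z p = 0} := by
  obtain ⟨k, F, G, hFG, rfl⟩ := hZ
  apply Set.Subset.antisymm
  · intro z hz p hp
    have hcl : IsClosed {w : Fin n → ℂ | eval w p = 0} :=
      isClosed_eq (MvPolynomial.continuous_eval p) continuous_const
    exact closure_minimal (fun w hw => hp w hw) hcl hz
  · intro z hz
    have hex : ∃ i, ∀ p ∈ vanIdeal (F i \ G i), eval z p = 0 := by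
      by_contra! hcon
      choose p hp hpz using hcon
      have h0 : eval z (∏ i, p i) = 0 := by
        apply hz
        intro w hw
        obtain ⟨i, hi⟩ := Set.mem_iUnion.1 hw
        rw [map_prod]
        exact Finset.prod_eq_zero (Finset.mem_univ i) (hp i w hi)
      rw [map_prod, Finset.prod_eq_zero_iff] at h0
      obtain ⟨i, -, hi⟩ := h0
      exact hpz i hi
    obtain ⟨i, hi⟩ := hex
    exact closure_mono (Set.subset_iUnion (fun i => F i \ G i) i)
      (diff_case (F i) (G i) (hFG i).1 (hFG i).2 z hi)
end
end
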